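/- arXiv:1305.4698 — 4 statements merged into one kernel-verified Lean document; each statement's English description precedes it below -/
import Mathlib

section
/- Let $n \ge 3$ and $\tau > 0$ with $\tau \neq n-2$. Then there exists a constant $C = C(n,\tau) > 1$ such that for all $y \in \mathbb{R}^n$, $$\frac{1}{C(1+|y|)^{\min(\tau,n-2)}} \le \int_{\mathbb{R}^n} \frac{dz}{|y-z|^{n-2}(1+|z|)^{2+\tau}} \le \frac{C}{(1+|y|)^{\min(\tau,n-2)}}.$$ -/
open Real MeasureTheory

section RadialWeight

open Set Module

/-- The radial weight `z ↦ ‖z‖ ^ (-a) * (R + ‖z‖) ^ (-b)`. -/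
noncomputable def radialWeight {E : Type*} [Norm E] (a b R : ℝ) (z : E) : ℝ :=
  ‖z‖ ^ (-a) * (R + ‖z‖) ^ (-b)

variable {E : Type*} [NormedAddCommGroup E]

lemma radialWeight_nonneg {R : ℝ} (hR : 0 ≤ R) (a b : ℝ) (z : E) : 0 ≤ radialWeight a b R z := by
  unfold radialWeight
  positivity

variable [NormedSpace ℝ E]

lemma radialWeight_smul {R : ℝ} (hR : 0 < R) (a b : ℝ) (z : E) :
    radialWeight a b R (R • z) = R ^ (-(a + b)) * radialWeight a b 1 z := by
  have h : R + R * ‖z‖ = R * (1 + ‖z‖) := by ring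
  unfold radialWeight
  rw [norm_smul, Real.norm_of_nonneg hR.le, h, mul_rpow hR.le (norm_nonneg z),
    mul_rpow hR.le (by positivity), show -(a + b) = -a + -b by ring, rpow_add hR]
  ring

variable [FiniteDimensional ℝ E] [MeasurableSpace E] [BorelSpace E]
  (μ : Measure E) [μ.IsAddHaarMeasure]

lemma integrable_radialWeight_one [Nontrivial E] {a b : ℝ} (ha : a < finrank ℝ E)
    (hab : (finrank ℝ E : ℝ) < a + b) : Integrable (radialWeight a b 1 : E → ℝ) μ := by
  have hd : 1 ≤ finrank ℝ E := finrank_pos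
  have hmeas : Measurable fun r : ℝ ↦ r ^ (finrank ℝ E - 1) • (r ^ (-a) * (1 + r) ^ (-b)) := by
    fun_prop
  have hpow : ∀ r : ℝ, 0 < r → r ^ (finrank ℝ E - 1) * r ^ (-a) = r ^ (finrank ℝ E - 1 - a) := by
    intro r hr
    rw [← rpow_natCast, ← rpow_add hr, Nat.cast_sub hd, Nat.cast_one]
    rfl
  refine (integrable_fun_norm_addHaar μ (f := fun r ↦ r ^ (-a) * (1 + r) ^ (-b))).2 ?_
  rw [← Ioc_union_Ioi_eq_Ioi zero_le_one]
  refine IntegrableOn.union ?_ ?_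
  · have h := (intervalIntegral.intervalIntegrable_rpow' (a := 0) (b := 1)
      (show -1 < (finrank ℝ E : ℝ) - 1 - a by linarith)).1
    refine h.mono' hmeas.aestronglyMeasurable
      (ae_restrict_of_forall_mem measurableSet_Ioc fun r hr ↦ ?_)
    have hr0 : 0 < r := hr.1
    rw [Real.norm_of_nonneg (by positivity), smul_eq_mul, ← mul_assoc, hpow r hr0]
    exact mul_le_of_le_one_right (by positivity)
      (rpow_le_one_of_one_le_of_nonpos (by linarith) (by linarith))
  · have h := integrableOn_Ioi_rpow_of_lt
      (show (finrank ℝ E : ℝ) - 1 - a - b < -1 by linarith) one_pos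
    refine h.mono' hmeas.aestronglyMeasurable
      (ae_restrict_of_forall_mem measurableSet_Ioi fun r hr ↦ ?_)
    have hr0 : 0 < r := one_pos.trans hr
    rw [Real.norm_of_nonneg (by positivity), smul_eq_mul, ← mul_assoc, hpow r hr0,
      sub_eq_add_neg _ b, rpow_add hr0]
    exact mul_le_mul_of_nonneg_left
      (rpow_le_rpow_of_nonpos hr0 (by linarith) (by linarith)) (by positivity)

lemma integrable_radialWeight [Nontrivial E] {a b R : ℝ} (hR : 0 < R) (ha : a < finrank ℝ E)
    (hab : (finrank ℝ E : ℝ) < a + b) :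
    Integrable (radialWeight a b R : E → ℝ) μ := by
  rw [← integrable_comp_smul_iff μ _ hR.ne']
  simp_rw [radialWeight_smul hR]
  exact (integrable_radialWeight_one μ ha hab).const_mul _

lemma integral_radialWeight {R : ℝ} (hR : 0 < R) (a b : ℝ) :
    ∫ z, radialWeight a b R z ∂μ =
      R ^ ((finrank ℝ E : ℝ) - (a + b)) * ∫ z, radialWeight a b 1 z ∂μ := by
  have h := Measure.integral_comp_smul μ (radialWeight a b R : E → ℝ) R
  simp_rw [radialWeight_smul hR] at h
  rw [integral_const_mul, abs_of_nonneg (by positivity), smul_eq_mul, ← rpow_natCast] at h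
  rw [sub_eq_add_neg, rpow_add hR, mul_assoc, h, mul_inv_cancel_left₀ (by positivity)]

lemma integral_radialWeight_zero_pos [Nontrivial E] {b : ℝ} (hb : (finrank ℝ E : ℝ) < b) :
    0 < ∫ z, radialWeight 0 b 1 z ∂μ := by
  have hd : (0 : ℝ) < finrank ℝ E := by exact_mod_cast finrank_pos
  rw [integral_pos_iff_support_of_nonneg (radialWeight_nonneg zero_le_one 0 b)
    (integrable_radialWeight_one μ hd (by linarith))]
  have h : Function.support (radialWeight 0 b 1 : E → ℝ) = univ := by
    refine eq_univ_of_forall fun z ↦ ?_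
    rw [Function.mem_support, radialWeight, neg_zero, rpow_zero, one_mul]
    positivity
  rw [h]
  exact Measure.measure_univ_pos.2 (NeZero.ne μ)

end RadialWeight

section NewtonianPotential

variable {E : Type*} [NormedAddCommGroup E]

/-- The integrand `z ↦ ‖y - z‖ ^ (-a) * (1 + ‖z‖) ^ (-b)` of the Riesz potential of a power weight. -/
noncomputable def rieszIntegrand (a b : ℝ) (y z : E) : ℝ := ‖y - z‖ ^ (-a) * (1 + ‖z‖) ^ (-b)

lemma rieszIntegrand_nonneg (a b : ℝ) (y z : E) : 0 ≤ rieszIntegrand a b y z := by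
  unfold rieszIntegrand
  positivity

lemma rieszIntegrand_le_of_near {a b : ℝ} (hb : 0 ≤ b) {y z : E}
    (h : ‖y - z‖ ≤ (1 + ‖y‖) / 2) :
    rieszIntegrand a b y z ≤ 3 ^ b * radialWeight a b (1 + ‖y‖) (y - z) := by
  have h1 : (1 + ‖y‖ + ‖y - z‖) / 3 ≤ 1 + ‖z‖ := by
    have := norm_sub_norm_le y z
    linarith
  have h2 := rpow_le_rpow_of_nonpos (z := -b) (by positivity) h1 (by linarith)
  rw [div_rpow (by positivity) (by positivity), rpow_neg (show (0 : ℝ) ≤ 3 by norm_num),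
    div_inv_eq_mul] at h2
  have h3 := mul_le_mul_of_nonneg_left h2 (show 0 ≤ ‖y - z‖ ^ (-a) by positivity)
  unfold rieszIntegrand radialWeight
  linarith

lemma rieszIntegrand_le_of_far {a b : ℝ} (ha : 0 ≤ a) (hb : 0 ≤ b) {y z : E} (hz : z ≠ 0)
    (h : (1 + ‖y‖) / 2 ≤ ‖y - z‖) :
    rieszIntegrand a b y z ≤ 6 ^ a * radialWeight b a (1 + ‖y‖) z := by
  have hz0 : 0 < ‖z‖ := norm_pos_iff.2 hz
  have h1 : (1 + ‖y‖ + ‖z‖) / 6 ≤ ‖y - z‖ := by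
    have := norm_sub_norm_le z y
    rw [norm_sub_rev] at this
    linarith [norm_nonneg y]
  have h2 := rpow_le_rpow_of_nonpos (z := -a) (by positivity) h1 (by linarith)
  rw [div_rpow (by positivity) (by positivity), rpow_neg (show (0 : ℝ) ≤ 6 by norm_num),
    div_inv_eq_mul] at h2
  have h3 : (1 + ‖z‖) ^ (-b) ≤ ‖z‖ ^ (-b) :=
    rpow_le_rpow_of_nonpos hz0 (by linarith) (by linarith)
  have h4 := mul_le_mul h2 h3 (by positivity) (by positivity)
  unfold rieszIntegrand radialWeight
  linarith

lemma rieszIntegrand_le_of_far' {a : ℝ} (ha : 0 ≤ a) (b : ℝ) {y z : E}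
    (h : (1 + ‖y‖) / 2 ≤ ‖y - z‖) :
    rieszIntegrand a b y z ≤ 2 ^ a * (1 + ‖y‖) ^ (-a) * radialWeight 0 b 1 z := by
  have h2 := rpow_le_rpow_of_nonpos (z := -a) (by positivity) h (by linarith)
  rw [div_rpow (by positivity) (by positivity), rpow_neg (show (0 : ℝ) ≤ 2 by norm_num),
    div_inv_eq_mul] at h2
  have h3 := mul_le_mul_of_nonneg_right h2 (show 0 ≤ (1 + ‖z‖) ^ (-b) by positivity)
  unfold rieszIntegrand radialWeight
  rw [neg_zero, rpow_zero]
  linarith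

lemma radialWeight_zero_le_rieszIntegrand {a b : ℝ} (ha : 0 ≤ a) (hb : 0 ≤ b) {y z : E}
    (hz : z ≠ y) : radialWeight 0 (a + b) (1 + ‖y‖) z ≤ rieszIntegrand a b y z := by
  have h0 : 0 < ‖y - z‖ := norm_pos_iff.2 (sub_ne_zero.2 hz.symm)
  have h1 := norm_sub_le y z
  unfold radialWeight rieszIntegrand
  rw [neg_zero, rpow_zero, one_mul, neg_add, rpow_add (by positivity)]
  refine mul_le_mul (rpow_le_rpow_of_nonpos h0 (by linarith) (by linarith))
    (rpow_le_rpow_of_nonpos (by positivity) ?_ (by linarith)) (by positivity) (by positivity)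
  linarith [norm_nonneg y]

lemma mul_radialWeight_zero_le_rieszIntegrand {a b : ℝ} (ha : 0 ≤ a) {y z : E} (hz : z ≠ y) :
    (1 + ‖y‖) ^ (-a) * radialWeight 0 (a + b) 1 z ≤ rieszIntegrand a b y z := by
  have h0 : 0 < ‖y - z‖ := norm_pos_iff.2 (sub_ne_zero.2 hz.symm)
  have h1 : ‖y - z‖ ≤ (1 + ‖y‖) * (1 + ‖z‖) := by
    have := norm_sub_le y z
    nlinarith [norm_nonneg y, norm_nonneg z]
  unfold radialWeight rieszIntegrand
  rw [neg_zero, rpow_zero, one_mul, neg_add, rpow_add (by positivity), ← mul_assoc,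
    ← mul_rpow (by positivity) (by positivity)]
  exact mul_le_mul_of_nonneg_right (rpow_le_rpow_of_nonpos h0 h1 (by linarith)) (by positivity)

open Module

variable [NormedSpace ℝ E] [FiniteDimensional ℝ E] [MeasurableSpace E] [BorelSpace E]
  [Nontrivial E] (μ : Measure E) [μ.IsAddHaarMeasure]

/-- The Newtonian potential of `(1 + ‖z‖) ^ (-(2 + τ))` converges and is bounded by a multiple of
`(1 + ‖y‖) ^ (-min τ (n - 2))`. -/
lemma exists_newtonianPotential_le {m τ : ℝ} (hm : 0 ≤ m) (hd : (finrank ℝ E : ℝ) = m + 2)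
    (hτ : 0 < τ) (hne : τ ≠ m) :
    ∃ C : ℝ, 0 ≤ C ∧ ∀ y : E, Integrable (rieszIntegrand m (2 + τ) y) μ ∧
      ∫ z, rieszIntegrand m (2 + τ) y z ∂μ ≤ C * (1 + ‖y‖) ^ (-min τ m) := by
  have hmeas (y : E) : Measurable (rieszIntegrand m (2 + τ) y) := by
    unfold rieszIntegrand
    fun_prop
  -- A dominating function with the right integral suffices.
  have key (C : ℝ) (g : E → E → ℝ)
      (hg : ∀ y, Integrable (g y) μ ∧ ∫ z, g y z ∂μ ≤ C * (1 + ‖y‖) ^ (-min τ m) ∧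
        ∀ z ≠ 0, (1 + ‖y‖) / 2 ≤ ‖y - z‖ → rieszIntegrand m (2 + τ) y z ≤ g y z)
      (hg0 : ∀ y z, 0 ≤ g y z) (hC : 0 ≤ C) :
      ∃ C : ℝ, 0 ≤ C ∧ ∀ y : E, Integrable (rieszIntegrand m (2 + τ) y) μ ∧
        ∫ z, rieszIntegrand m (2 + τ) y z ∂μ ≤ C * (1 + ‖y‖) ^ (-min τ m) := by
    set K := ∫ z : E, radialWeight m (2 + τ) 1 z ∂μ with hK
    have hK0 : 0 ≤ K := integral_nonneg (radialWeight_nonneg zero_le_one _ _)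
    refine ⟨3 ^ (2 + τ) * K + C, by positivity, fun y ↦ ?_⟩
    obtain ⟨hgi, hgC, hgle⟩ := hg y
    have hR : 0 < 1 + ‖y‖ := by positivity
    have hi : Integrable (fun z : E ↦ 3 ^ (2 + τ) * radialWeight m (2 + τ) (1 + ‖y‖) (y - z)) μ :=
      ((integrable_radialWeight μ hR (by linarith) (by linarith)).comp_sub_left y).const_mul _
    have hle : ∀ᵐ z ∂μ, rieszIntegrand m (2 + τ) y z ≤
        3 ^ (2 + τ) * radialWeight m (2 + τ) (1 + ‖y‖) (y - z) + g y z := by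
      filter_upwards [Measure.ae_ne μ 0] with z hz
      have h1 := radialWeight_nonneg hR.le m (2 + τ) (y - z)
      rcases le_total ‖y - z‖ ((1 + ‖y‖) / 2) with h | h
      · exact (rieszIntegrand_le_of_near (by linarith) h).trans (le_add_of_nonneg_right (hg0 y z))
      · exact (hgle z hz h).trans (le_add_of_nonneg_left (by positivity))
    have hint : Integrable (rieszIntegrand m (2 + τ) y) μ := by
      refine (hi.add hgi).mono' (hmeas y).aestronglyMeasurable ?_
      filter_upwards [hle] with z hz
      rwa [Real.norm_of_nonneg (rieszIntegrand_nonneg _ _ _ _)]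
    refine ⟨hint, (integral_mono_ae hint (hi.add hgi) hle).trans ?_⟩
    rw [integral_add' hi hgi, integral_const_mul,
      integral_sub_left_eq_self (radialWeight m (2 + τ) (1 + ‖y‖)) μ y,
      integral_radialWeight μ hR, ← hK, hd, show m + 2 - (m + (2 + τ)) = -τ by ring, add_mul]
    refine add_le_add ?_ hgC
    have h2 : (1 + ‖y‖) ^ (-τ) ≤ (1 + ‖y‖) ^ (-min τ m) :=
      rpow_le_rpow_of_exponent_le (by linarith [norm_nonneg y]) (neg_le_neg (min_le_left _ _))
    have h3 : 0 ≤ (3 : ℝ) ^ (2 + τ) * K := by positivity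
    linarith [mul_le_mul_of_nonneg_left h2 h3]
  rcases hne.lt_or_gt with h | h
  · have hK0 : 0 ≤ ∫ z : E, radialWeight (2 + τ) m 1 z ∂μ :=
      integral_nonneg (radialWeight_nonneg zero_le_one _ _)
    refine key (6 ^ m * ∫ z : E, radialWeight (2 + τ) m 1 z ∂μ)
      (fun y z ↦ 6 ^ m * radialWeight (2 + τ) m (1 + ‖y‖) z) (fun y ↦ ⟨?_, ?_, ?_⟩)
      (fun y z ↦ mul_nonneg (by positivity) (radialWeight_nonneg (by positivity) _ _ _))
      (by positivity)
    · exact (integrable_radialWeight μ (by positivity) (by linarith) (by linarith)).const_mul _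
    · rw [integral_const_mul, integral_radialWeight μ (by positivity), hd, min_eq_left h.le,
        show m + 2 - (2 + τ + m) = -τ by ring]
      exact le_of_eq (by ring)
    · exact fun z hz hyz ↦ rieszIntegrand_le_of_far hm (by linarith) hz hyz
  · have hK0 : 0 ≤ ∫ z : E, radialWeight 0 (2 + τ) 1 z ∂μ :=
      integral_nonneg (radialWeight_nonneg zero_le_one _ _)
    refine key (2 ^ m * ∫ z : E, radialWeight 0 (2 + τ) 1 z ∂μ)
      (fun y z ↦ 2 ^ m * (1 + ‖y‖) ^ (-m) * radialWeight 0 (2 + τ) 1 z) (fun y ↦ ⟨?_, ?_, ?_⟩)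
      (fun y z ↦ mul_nonneg (by positivity) (radialWeight_nonneg zero_le_one _ _ _))
      (by positivity)
    · exact (integrable_radialWeight μ one_pos (by linarith) (by linarith)).const_mul _
    · rw [integral_const_mul, min_eq_right h.le]
      exact le_of_eq (by ring)
    · exact fun z _ hyz ↦ rieszIntegrand_le_of_far' hm _ hyz

lemma le_newtonianPotential {m τ : ℝ} (hm : 0 ≤ m) (hd : (finrank ℝ E : ℝ) = m + 2)
    (hτ : 0 < τ) {y : E} (hint : Integrable (rieszIntegrand m (2 + τ) y) μ) :
    (∫ z, radialWeight 0 (m + (2 + τ)) 1 z ∂μ) * (1 + ‖y‖) ^ (-min τ m) ≤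
      ∫ z, rieszIntegrand m (2 + τ) y z ∂μ := by
  have hR : 0 < 1 + ‖y‖ := by positivity
  have hi {R : ℝ} (hR : 0 < R) : Integrable (radialWeight 0 (m + (2 + τ)) R : E → ℝ) μ :=
    integrable_radialWeight μ hR (by linarith) (by linarith)
  rcases min_choice τ m with h | h <;> rw [h]
  · have hle := integral_mono_ae (hi hR) hint ((Measure.ae_ne μ y).mono fun z hz ↦
      radialWeight_zero_le_rieszIntegrand hm (by linarith) hz)
    rwa [integral_radialWeight μ hR, hd, show m + 2 - (0 + (m + (2 + τ))) = -τ by ring,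
      mul_comm] at hle
  · have hle := integral_mono_ae ((hi one_pos).const_mul _) hint ((Measure.ae_ne μ y).mono
      fun z hz ↦ mul_radialWeight_zero_le_rieszIntegrand (b := 2 + τ) hm hz)
    rwa [integral_const_mul, mul_comm] at hle

end NewtonianPotential

theorem stmt_1 {n : ℕ} (hn : 3 ≤ n) (τ : ℝ) (hτ : 0 < τ) (hne : τ ≠ (n : ℝ) - 2) :
    ∃ C : ℝ, 1 < C ∧ ∀ y : EuclideanSpace ℝ (Fin n),
      1 / (C * (1 + ‖y‖) ^ min τ ((n : ℝ) - 2)) ≤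
        (∫ z : EuclideanSpace ℝ (Fin n),
          1 / (‖y - z‖ ^ ((n : ℝ) - 2) * (1 + ‖z‖) ^ (2 + τ))) ∧
      (∫ z : EuclideanSpace ℝ (Fin n),
          1 / (‖y - z‖ ^ ((n : ℝ) - 2) * (1 + ‖z‖) ^ (2 + τ))) ≤
        C / (1 + ‖y‖) ^ min τ ((n : ℝ) - 2) := by
  have hn' : (3 : ℝ) ≤ n := by exact_mod_cast hn
  set m : ℝ := (n : ℝ) - 2 with hm
  have hm0 : 0 ≤ m := by linarith
  have : NeZero n := ⟨by omega⟩
  have hd : (Module.finrank ℝ (EuclideanSpace ℝ (Fin n)) : ℝ) = m + 2 := by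
    rw [finrank_euclideanSpace_fin]
    linarith
  have heq (y z : EuclideanSpace ℝ (Fin n)) :
      1 / (‖y - z‖ ^ m * (1 + ‖z‖) ^ (2 + τ)) = rieszIntegrand m (2 + τ) y z := by
    rw [rieszIntegrand, rpow_neg (norm_nonneg _), rpow_neg (by positivity), one_div, mul_inv]
  simp_rw [heq]
  obtain ⟨U, hU0, hU⟩ := exists_newtonianPotential_le
    (volume : Measure (EuclideanSpace ℝ (Fin n))) hm0 hd hτ hne
  have hK := integral_radialWeight_zero_pos (volume : Measure (EuclideanSpace ℝ (Fin n)))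
    (show (Module.finrank ℝ (EuclideanSpace ℝ (Fin n)) : ℝ) < m + (2 + τ) by linarith)
  set K := ∫ z : EuclideanSpace ℝ (Fin n), radialWeight 0 (m + (2 + τ)) 1 z
  have hK' : 0 < K⁻¹ := inv_pos.2 hK
  refine ⟨1 + U + K⁻¹, by linarith, fun y ↦ ?_⟩
  have hR : 0 < 1 + ‖y‖ := by positivity
  obtain ⟨hint, hle⟩ := hU y
  constructor
  · refine le_trans ?_ (le_newtonianPotential volume hm0 hd hτ hint)
    rw [one_div, mul_inv, ← rpow_neg hR.le]
    exact mul_le_mul_of_nonneg_right (inv_le_of_inv_le₀ hK (by linarith)) (by positivity)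
  · rw [div_eq_mul_inv, ← rpow_neg hR.le]
    exact hle.trans (mul_le_mul_of_nonneg_right (by linarith) (by positivity))
end

section
/- Let $n \ge 3$. There exists a constant $C = C(n) > 1$ such that for all $y \in \mathbb{R}^n$, $$\frac{\max(1,\log|y|)}{C(1+|y|)^{n-2}} \le \int_{\mathbb{R}^n}\frac{dz}{|y-z|^{n-2}(1+|z|)^{n}} \le \frac{C\max(1,\log|y|)}{(1+|y|)^{n-2}}.$$ -/
open Real MeasureTheory

/-- Polar coordinates for a radial function supported on `‖x‖ ∈ S`, where `k` is the product of
its profile with the Jacobian. -/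
lemma radial_indicator_integrable_and_integral_eq {E : Type*} [NormedAddCommGroup E]
    [NormedSpace ℝ E] [FiniteDimensional ℝ E] [Nontrivial E] [MeasurableSpace E] [BorelSpace E]
    (μ : Measure E) [μ.IsAddHaarMeasure] {S : Set ℝ} (hS : MeasurableSet S) (hS0 : S ⊆ Set.Ioi 0)
    {g k : ℝ → ℝ} (hgk : ∀ r ∈ S, r ^ (Module.finrank ℝ E - 1) * g r = k r)
    (hk : IntegrableOn k S) :
    Integrable (fun x : E => S.indicator g ‖x‖) μ ∧
      ∫ x : E, S.indicator g ‖x‖ ∂μ =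
        Module.finrank ℝ E * μ.real (Metric.ball 0 1) * ∫ r in S, k r := by
  have hfun : (fun r : ℝ => r ^ (Module.finrank ℝ E - 1) • S.indicator g r) = S.indicator k := by
    funext r
    by_cases hr : r ∈ S
    · simp [hr, hgk r hr]
    · simp [hr]
  constructor
  · rw [integrable_fun_norm_addHaar μ (f := S.indicator g), hfun]
    exact ((integrable_indicator_iff hS).2 hk).integrableOn
  · rw [integral_fun_norm_addHaar μ (S.indicator g), hfun, setIntegral_indicator hS,
      Set.inter_eq_right.2 hS0, nsmul_eq_mul, smul_eq_mul, mul_assoc]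

lemma intervalIntegrable_pow_div_one_add_pow (m : ℕ) {a b : ℝ} (ha : 0 ≤ a) (hab : a ≤ b) :
    IntervalIntegrable (fun r : ℝ => r ^ (m + 1) / (1 + r) ^ (m + 2)) volume a b := by
  apply ContinuousOn.intervalIntegrable
  rw [Set.uIcc_of_le hab]
  refine ContinuousOn.div (by fun_prop) (by fun_prop) fun r hr => ?_
  have : 0 < 1 + r := by linarith [hr.1]
  positivity

lemma integral_pow_div_one_add_pow_le_log (m : ℕ) {L : ℝ} (hL : 0 ≤ L) :
    ∫ r in (0 : ℝ)..L, r ^ (m + 1) / (1 + r) ^ (m + 2) ≤ log (1 + L) := by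
  have hlog : ∫ r in (0 : ℝ)..L, (1 + r)⁻¹ = log (1 + L) := by
    rw [intervalIntegral.integral_comp_add_left (fun r => r⁻¹) (1 : ℝ),
      integral_inv_of_pos (by norm_num) (by linarith)]
    simp
  rw [← hlog]
  refine intervalIntegral.integral_mono_on hL
    (intervalIntegrable_pow_div_one_add_pow m le_rfl hL) ?_ fun r hr => ?_
  · apply ContinuousOn.intervalIntegrable
    rw [Set.uIcc_of_le hL]
    refine ContinuousOn.inv₀ (by fun_prop) fun r hr => ?_
    linarith [hr.1]
  · have h0 : 0 ≤ r := hr.1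
    have h1 : 0 < 1 + r := by linarith
    rw [div_le_iff₀ (by positivity), pow_succ (1 + r) (m + 1), mul_comm ((1 + r) ^ (m + 1)),
      inv_mul_cancel_left₀ h1.ne']
    gcongr
    linarith

lemma log_div_le_integral_pow_div_one_add_pow (m : ℕ) {L : ℝ} (hL : 1 / 2 ≤ L) :
    log (2 * L) / 3 ^ (m + 2) ≤ ∫ r in (0 : ℝ)..L, r ^ (m + 1) / (1 + r) ^ (m + 2) := by
  have hlog : ∫ r in (1 / 2 : ℝ)..L, r⁻¹ / 3 ^ (m + 2) = log (2 * L) / 3 ^ (m + 2) := by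
    rw [intervalIntegral.integral_div, integral_inv_of_pos (by norm_num) (by linarith)]
    congr 2
    ring
  have hInt := intervalIntegrable_pow_div_one_add_pow m (by norm_num : (0 : ℝ) ≤ 1 / 2) hL
  have hInt₀ :=
    intervalIntegrable_pow_div_one_add_pow m le_rfl (by norm_num : (0 : ℝ) ≤ 1 / 2)
  rw [← hlog, ← intervalIntegral.integral_add_adjacent_intervals hInt₀ hInt]
  have hnonneg : 0 ≤ ∫ r in (0 : ℝ)..(1 / 2), r ^ (m + 1) / (1 + r) ^ (m + 2) := by
    refine intervalIntegral.integral_nonneg (by norm_num) fun r hr => ?_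
    have h0 : 0 ≤ r := hr.1
    positivity
  refine le_add_of_nonneg_of_le hnonneg
    (intervalIntegral.integral_mono_on hL ?_ hInt fun r hr => ?_)
  · apply ContinuousOn.intervalIntegrable
    rw [Set.uIcc_of_le hL]
    refine ContinuousOn.div_const (ContinuousOn.inv₀ (by fun_prop) fun r hr => ?_) _
    linarith [hr.1]
  · have h0 : 1 / 2 ≤ r := hr.1
    have hr0 : 0 < r := by linarith
    calc r⁻¹ / 3 ^ (m + 2) = r ^ (m + 1) / (3 * r) ^ (m + 2) := by
          rw [mul_pow, pow_succ r (m + 1)]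
          field_simp
      _ ≤ r ^ (m + 1) / (1 + r) ^ (m + 2) := by
          gcongr
          linarith

lemma riesz_kernel_le {m : ℕ} {R a b L : ℝ} (hL : L = 1 + R) (hR : 0 ≤ R) (ha : 0 < a)
    (hb : 0 < b) (hRab : R ≤ a + b) (hba : b ≤ R + a) :
    1 / (a ^ m * (1 + b) ^ (m + 2)) ≤
      (Set.Ioc 0 (L / 2)).indicator (fun r : ℝ => (2 / L) ^ (m + 2) / r ^ m) a +
      (Set.Ioc 0 L).indicator (fun r : ℝ => (2 / L) ^ m / (1 + r) ^ (m + 2)) b +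
      (Set.Ioi L).indicator (fun r : ℝ => 3 ^ m / r ^ (2 * m + 2)) b := by
  have hL0 : 0 < L := by linarith
  have h₁ : 0 ≤ (Set.Ioc 0 (L / 2)).indicator (fun r : ℝ => (2 / L) ^ (m + 2) / r ^ m) a :=
    Set.indicator_apply_nonneg fun _ => by positivity
  have h₂ : 0 ≤ (Set.Ioc 0 L).indicator (fun r : ℝ => (2 / L) ^ m / (1 + r) ^ (m + 2)) b :=
    Set.indicator_apply_nonneg fun _ => by positivity
  have h₃ : 0 ≤ (Set.Ioi L).indicator (fun r : ℝ => (3 : ℝ) ^ m / r ^ (2 * m + 2)) b :=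
    Set.indicator_apply_nonneg fun _ => by positivity
  rcases le_or_gt a (L / 2) with haL | haL
  · refine le_trans ?_ (le_add_of_nonneg_right h₃)
    refine le_trans ?_ (le_add_of_nonneg_right h₂)
    rw [Set.indicator_of_mem (show a ∈ Set.Ioc 0 (L / 2) from ⟨ha, haL⟩)]
    calc 1 / (a ^ m * (1 + b) ^ (m + 2)) ≤ 1 / (a ^ m * (L / 2) ^ (m + 2)) := by
          gcongr
          linarith
      _ = (2 / L) ^ (m + 2) / a ^ m := by
          rw [div_pow, div_pow]
          field_simp
  rcases le_or_gt b L with hbL | hbL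
  · refine le_trans ?_ (le_add_of_nonneg_right h₃)
    refine le_trans ?_ (le_add_of_nonneg_left h₁)
    rw [Set.indicator_of_mem (show b ∈ Set.Ioc 0 L from ⟨hb, hbL⟩)]
    calc 1 / (a ^ m * (1 + b) ^ (m + 2)) ≤ 1 / ((L / 2) ^ m * (1 + b) ^ (m + 2)) := by
          gcongr
      _ = (2 / L) ^ m / (1 + b) ^ (m + 2) := by
          rw [div_pow, div_pow]
          field_simp
  · refine le_trans ?_ (le_add_of_nonneg_left (add_nonneg h₁ h₂))
    rw [Set.indicator_of_mem (show b ∈ Set.Ioi L from hbL)]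
    calc 1 / (a ^ m * (1 + b) ^ (m + 2)) ≤ 1 / ((b / 3) ^ m * b ^ (m + 2)) := by
          gcongr <;> linarith
      _ = 3 ^ m / b ^ (2 * m + 2) := by
          rw [div_pow, show 2 * m + 2 = m + (m + 2) by ring, pow_add b m (m + 2)]
          field_simp

lemma riesz_kernel_integral_bounds {E : Type*} [NormedAddCommGroup E] [NormedSpace ℝ E]
    [FiniteDimensional ℝ E] [MeasurableSpace E] [BorelSpace E] (μ : Measure E)
    [μ.IsAddHaarMeasure] {m : ℕ} (hm : 1 ≤ m) (hdim : Module.finrank ℝ E = m + 2) (y : E)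
    {c L J : ℝ} (hc : c = (m + 2 : ℕ) * μ.real (Metric.ball 0 1))
    (hL : L = 1 + ‖y‖) (hJ : J = ∫ r in (0 : ℝ)..L, r ^ (m + 1) / (1 + r) ^ (m + 2)) :
    c * J / (2 * L) ^ m ≤ ∫ z, 1 / (‖y - z‖ ^ m * (1 + ‖z‖) ^ (m + 2)) ∂μ ∧
      ∫ z, 1 / (‖y - z‖ ^ m * (1 + ‖z‖) ^ (m + 2)) ∂μ ≤
        c * (2 ^ m / 2 + 2 ^ m * J + 3 ^ m / m) / L ^ m := by
  have : Nontrivial E := Module.nontrivial_of_finrank_pos (R := ℝ) (by omega)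
  have hy : 0 ≤ ‖y‖ := norm_nonneg y
  have hL0 : 0 < L := by linarith
  have hm0 : (0 : ℝ) < m := by exact_mod_cast hm
  have hpolar := fun (S : Set ℝ) (hS : MeasurableSet S) (hS0 : S ⊆ Set.Ioi 0) (g k : ℝ → ℝ)
      (hgk : ∀ r ∈ S, r ^ (m + 1) * g r = k r) (hk : IntegrableOn k S) =>
    radial_indicator_integrable_and_integral_eq μ hS hS0 (g := g) (k := k)
      (by simpa [hdim] using hgk) hk
  rw [hdim, ← hc] at hpolar
  obtain ⟨hi₁, he₁⟩ := hpolar (Set.Ioc 0 (L / 2)) measurableSet_Ioc (fun r hr => hr.1)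
    (fun r => (2 / L) ^ (m + 2) / r ^ m) (fun r => (2 / L) ^ (m + 2) * r)
    (fun r hr => by
      have : r ≠ 0 := hr.1.ne'
      rw [pow_succ r m]
      field_simp)
    ((continuous_const.mul continuous_id).integrableOn_Ioc)
  have hkJ : IntegrableOn (fun r : ℝ => r ^ (m + 1) / (1 + r) ^ (m + 2)) (Set.Ioc 0 L) :=
    (intervalIntegrable_iff_integrableOn_Ioc_of_le hL0.le).1
      (intervalIntegrable_pow_div_one_add_pow m le_rfl hL0.le)
  rw [intervalIntegral.integral_of_le hL0.le] at hJ
  have hJs (s : ℝ) := hpolar (Set.Ioc 0 L) measurableSet_Ioc (fun r hr => hr.1)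
    (fun r => s / (1 + r) ^ (m + 2)) (fun r => s * (r ^ (m + 1) / (1 + r) ^ (m + 2)))
    (fun r _ => by ring) (hkJ.const_mul s)
  simp only [integral_const_mul, ← hJ] at hJs
  obtain ⟨hi₂, he₂⟩ := hJs ((2 / L) ^ m)
  obtain ⟨hi₃, he₃⟩ := hpolar (Set.Ioi L) measurableSet_Ioi (Set.Ioi_subset_Ioi hL0.le)
    (fun r => 3 ^ m / r ^ (2 * m + 2)) (fun r => 3 ^ m * r ^ (-((m : ℝ) + 1)))
    (fun r hr => by
      have hr0 : 0 < r := hL0.trans hr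
      rw [rpow_neg hr0.le, show (m : ℝ) + 1 = ((m + 1 : ℕ) : ℝ) by push_cast; ring,
        rpow_natCast, show 2 * m + 2 = (m + 1) + (m + 1) by ring, pow_add r (m + 1)]
      field_simp)
    ((integrableOn_Ioi_rpow_of_lt (by linarith) hL0).const_mul _)
  have hi₁' := hi₁.comp_sub_left y
  have he₁' := integral_sub_left_eq_self
    (fun x : E => (Set.Ioc 0 (L / 2)).indicator (fun r => (2 / L) ^ (m + 2) / r ^ m) ‖x‖) μ y
  have hdom := (hi₁'.add hi₂).add hi₃
  have hae : ∀ᵐ z ∂μ, z ≠ 0 ∧ z ≠ y := by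
    filter_upwards [Measure.ae_ne μ 0, Measure.ae_ne μ y] with z h₁ h₂
    exact ⟨h₁, h₂⟩
  have hle : ∀ᵐ z ∂μ, 1 / (‖y - z‖ ^ m * (1 + ‖z‖) ^ (m + 2)) ≤
      (Set.Ioc 0 (L / 2)).indicator (fun r : ℝ => (2 / L) ^ (m + 2) / r ^ m) ‖y - z‖ +
      (Set.Ioc 0 L).indicator (fun r : ℝ => (2 / L) ^ m / (1 + r) ^ (m + 2)) ‖z‖ +
      (Set.Ioi L).indicator (fun r : ℝ => 3 ^ m / r ^ (2 * m + 2)) ‖z‖ := by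
    filter_upwards [hae] with z hz
    refine riesz_kernel_le hL hy (norm_pos_iff.2 (sub_ne_zero.2 hz.2.symm))
      (norm_pos_iff.2 hz.1) ?_ ?_
    · simpa using norm_add_le (y - z) z
    · simpa using norm_sub_le y (y - z)
  have hInt : Integrable
      (fun z => 1 / (‖y - z‖ ^ m * (1 + ‖z‖) ^ (m + 2))) μ := by
    refine hdom.mono' (by fun_prop : Measurable _).aestronglyMeasurable ?_
    filter_upwards [hle] with z hz
    rwa [norm_of_nonneg (by positivity)]
  constructor
  · obtain ⟨hi, he⟩ := hJs (1 / (2 * L) ^ m)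
    calc c * J / (2 * L) ^ m = c * (1 / (2 * L) ^ m * J) := by ring
      _ = _ := he.symm
      _ ≤ _ := by
        refine integral_mono_ae hi hInt ?_
        filter_upwards [hae] with z hz
        refine Set.indicator_apply_le' (fun hzL => ?_) fun _ => by positivity
        have hpos : 0 < ‖y - z‖ := norm_pos_iff.2 (sub_ne_zero.2 hz.2.symm)
        have : ‖y - z‖ ≤ 2 * L := by linarith [norm_sub_le y z, hzL.2]
        rw [div_div]
        gcongr
  · refine (integral_mono_ae hInt hdom hle).trans_eq ?_
    have hI : ∫ r in Set.Ioc 0 (L / 2), r = (L / 2) ^ 2 / 2 := by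
      rw [← intervalIntegral.integral_of_le (by positivity), integral_id]
      ring
    rw [integral_add' (hi₁'.add hi₂) hi₃, integral_add' hi₁' hi₂, he₁', he₁, he₂, he₃,
      integral_const_mul, integral_const_mul, integral_Ioi_rpow_of_lt (by linarith) hL0, hI,
      show -((m : ℝ) + 1) + 1 = -m by ring, rpow_neg hL0.le, rpow_natCast, div_pow, div_pow,
      div_pow, pow_add, pow_add]
    field_simp

lemma log_two_add_le {R : ℝ} (hR : 0 ≤ R) : log (2 + R) ≤ 3 * max 1 (log R) := by
  have h₁ := le_max_left 1 (log R)
  have h₂ := le_max_right 1 (log R)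
  have h₃ : log 3 ≤ 2 := by linarith [log_le_sub_one_of_pos (by norm_num : (0 : ℝ) < 3)]
  rcases le_or_gt R 1 with h | h
  · linarith [log_le_log (by linarith) (by linarith : 2 + R ≤ 3)]
  · have := log_le_log (by linarith) (by linarith : 2 + R ≤ 3 * R)
    rw [log_mul (by norm_num) (by linarith)] at this
    linarith

lemma max_one_log_le {R : ℝ} (hR : 0 ≤ R) : max 1 (log R) ≤ 2 * log (2 * (1 + R)) := by
  have h₁ : log 2 ≤ log (2 * (1 + R)) := log_le_log (by norm_num) (by linarith)
  have h₂ := log_two_gt_d9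
  refine max_le (by linarith) ?_
  rcases hR.eq_or_lt with rfl | h
  · simp only [log_zero]
    linarith
  · linarith [log_le_log h (by linarith : R ≤ 2 * (1 + R))]

theorem stmt_2 {n : ℕ} (hn : 3 ≤ n) :
    ∃ C : ℝ, 1 < C ∧ ∀ y : EuclideanSpace ℝ (Fin n),
      max 1 (Real.log ‖y‖) / (C * (1 + ‖y‖) ^ ((n : ℝ) - 2)) ≤
        (∫ z : EuclideanSpace ℝ (Fin n),
          1 / (‖y - z‖ ^ ((n : ℝ) - 2) * (1 + ‖z‖) ^ (n : ℝ))) ∧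
      (∫ z : EuclideanSpace ℝ (Fin n),
          1 / (‖y - z‖ ^ ((n : ℝ) - 2) * (1 + ‖z‖) ^ (n : ℝ))) ≤
        C * max 1 (Real.log ‖y‖) / (1 + ‖y‖) ^ ((n : ℝ) - 2) := by
  obtain ⟨m, rfl⟩ : ∃ m, n = m + 2 := ⟨n - 2, by omega⟩
  have hm : 1 ≤ m := by omega
  have hm1 : (1 : ℝ) ≤ m := by exact_mod_cast hm
  obtain ⟨c, hc⟩ : ∃ c : ℝ, c = (m + 2 : ℕ) *
      (volume : Measure (EuclideanSpace ℝ (Fin (m + 2)))).real (Metric.ball 0 1) := ⟨_, rfl⟩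
  have hc0 : 0 < c := by
    rw [hc]
    refine mul_pos (by positivity) ?_
    exact ENNReal.toReal_pos (Metric.measure_ball_pos volume _ one_pos).ne' measure_ball_lt_top.ne
  simp only [show ((m + 2 : ℕ) : ℝ) - 2 = (m : ℝ) by push_cast; ring, rpow_natCast]
  have hA : 0 < 5 * c * 3 ^ m := by positivity
  have hB : 0 < 2 * 2 ^ m * 3 ^ (m + 2) / c := by positivity
  refine ⟨1 + 5 * c * 3 ^ m + 2 * 2 ^ m * 3 ^ (m + 2) / c, by linarith, fun y => ?_⟩
  have hy := norm_nonneg y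
  obtain ⟨hlow, hup⟩ := riesz_kernel_integral_bounds volume hm (by simp) y hc rfl rfl
  have hJup := integral_pow_div_one_add_pow_le_log m (by linarith : 0 ≤ 1 + ‖y‖)
  have hJlow := log_div_le_integral_pow_div_one_add_pow m (by linarith : 1 / 2 ≤ 1 + ‖y‖)
  have hMup := log_two_add_le hy
  have hMlow := max_one_log_le hy
  have hM1 := le_max_left 1 (log ‖y‖)
  rw [show 1 + (1 + ‖y‖) = 2 + ‖y‖ by ring] at hJup
  set J := ∫ r in (0 : ℝ)..(1 + ‖y‖), r ^ (m + 1) / (1 + r) ^ (m + 2)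
  set M := max 1 (log ‖y‖)
  set L := 1 + ‖y‖
  have hL0 : 0 < L := by positivity
  constructor
  · refine le_trans ?_ hlow
    calc M / ((1 + 5 * c * 3 ^ m + 2 * 2 ^ m * 3 ^ (m + 2) / c) * L ^ m)
        ≤ M / ((2 * 2 ^ m * 3 ^ (m + 2) / c) * L ^ m) := by
          gcongr
          linarith
      _ = c * ((M / 2) / 3 ^ (m + 2)) / (2 * L) ^ m := by
          rw [mul_pow]
          field_simp
      _ ≤ c * J / (2 * L) ^ m := by
          gcongr
          refine le_trans ?_ hJlow
          gcongr
          linarith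
  · refine hup.trans ?_
    have h23 : (2 : ℝ) ^ m ≤ 3 ^ m := by gcongr; norm_num
    have h3 : (3 : ℝ) ^ m / m ≤ 3 ^ m := div_le_self (by positivity) hm1
    have h2J : (2 : ℝ) ^ m * J ≤ 3 ^ m * (3 * M) :=
      mul_le_mul h23 (hJup.trans hMup)
        (intervalIntegral.integral_nonneg hL0.le fun r hr => by
          have := hr.1
          positivity) (by positivity)
    have h3M : (3 : ℝ) ^ m ≤ 3 ^ m * M := le_mul_of_one_le_right (by positivity) hM1
    have h2 : (0 : ℝ) < 2 ^ m := by positivity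
    calc c * (2 ^ m / 2 + 2 ^ m * J + 3 ^ m / m) / L ^ m
        ≤ c * (5 * (3 ^ m * M)) / L ^ m := by
          gcongr
          linarith
      _ = 5 * c * 3 ^ m * M / L ^ m := by ring
      _ ≤ (1 + 5 * c * 3 ^ m + 2 * 2 ^ m * 3 ^ (m + 2) / c) * M / L ^ m := by
          gcongr
          linarith
end

section
/- Let $n \ge 3$, $0<\alpha<1$, and let $f \in C^{\alpha}_{loc}(\mathbb{R}^n)$ be nonnegative outside some compact set. Suppose $u \in C^2(\mathbb{R}^n)$ satisfies $-\Delta u = f$ in $\mathbb{R}^n$ and $\liminf_{|x|\to\infty} u(x) > -\infty$. Then there exists a constant $a \ge \min(0, \liminf_{|x|\to\infty} u(x))$ such that for every $x \in \mathbb{R}^n$, $$u(x) = \frac{1}{n(n-2)\omega_n}\int_{\mathbb{R}^n}\frac{f(\tilde{x})\,d\tilde{x}}{|x-\tilde{x}|^{n-2}} + a,$$ where $\omega_n$ is the volume of the unit ball in $\mathbb{R}^n$. -/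
open Real MeasureTheory Filter

/-- The Laplacian of a function on Euclidean space, as the sum of the second
partial derivatives along the coordinate directions. -/
noncomputable def lap {n : ℕ} (u : EuclideanSpace ℝ (Fin n) → ℝ)
    (x : EuclideanSpace ℝ (Fin n)) : ℝ :=
  ∑ i : Fin n,
    fderiv ℝ (fun y => fderiv ℝ u y (EuclideanSpace.single i 1)) x (EuclideanSpace.single i 1)

section Profile

open Set Topology

/-- Two functions that agree to first order at `T`, glued together at `T`. -/
lemma hasDerivAt_ite_le {f g f' g' : ℝ → ℝ} {T : ℝ} (hf : ∀ s ≤ T, HasDerivAt f (f' s) s)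
    (hg : ∀ s, T ≤ s → HasDerivAt g (g' s) s) (h : f T = g T) (h' : f' T = g' T) (s : ℝ) :
    HasDerivAt (fun s => if s ≤ T then f s else g s) (if s ≤ T then f' s else g' s) s := by
  rcases lt_trichotomy s T with hs | rfl | hs
  · rw [if_pos hs.le]
    refine (hf s hs.le).congr_of_eventuallyEq ?_
    filter_upwards [Iio_mem_nhds hs] with x hx
    rw [if_pos (le_of_lt hx)]
  · rw [if_pos le_rfl]
    have h1 : HasDerivWithinAt (fun r => if r ≤ s then f r else g r) (f' s) (Iic s) s :=
      (hf s le_rfl).hasDerivWithinAt.congr (fun x hx => if_pos hx) (if_pos le_rfl)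
    have h2 : HasDerivWithinAt (fun r => if r ≤ s then f r else g r) (f' s) (Ici s) s := by
      rw [h']
      refine (hg s le_rfl).hasDerivWithinAt.congr (fun x hx => ?_) (by simp [h])
      rcases eq_or_lt_of_le (mem_Ici.1 hx) with rfl | hx
      · simp [h]
      · exact if_neg (not_le.2 hx)
    simpa [Iic_union_Ici] using h1.union h2
  · rw [if_neg (not_le.2 hs)]
    refine (hg s hs.le).congr_of_eventuallyEq ?_
    filter_upwards [Ioi_mem_nhds hs] with x hx
    rw [if_neg (not_le.2 hx)]

/-- The function `s ↦ s ^ (-m)`, replaced on `s ≤ T` by its second order Taylor polynomial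
at `T`. -/
noncomputable def truncPow (m T s : ℝ) : ℝ :=
  if s ≤ T then T ^ (-m) * (1 - m * (s / T - 1) + m * (m + 1) / 2 * (s / T - 1) ^ 2)
  else s ^ (-m)

/-- The derivative of `truncPow m T`. -/
noncomputable def truncPowDeriv (m T s : ℝ) : ℝ :=
  if s ≤ T then T ^ (-m - 1) * (-m + m * (m + 1) * (s / T - 1)) else -m * s ^ (-m - 1)

/-- The second derivative of `truncPow m T`. -/
noncomputable def truncPowDeriv2 (m T s : ℝ) : ℝ :=
  m * (m + 1) * (max s T) ^ (-m - 2)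

/-- The radial profile of minus the Laplacian of `truncPow m T (‖y‖ ^ 2)` in dimension
`2 * m + 2`. -/
noncomputable def bumpProfile (m T s : ℝ) : ℝ :=
  4 * m * (m + 1) * (m + 2) * T ^ (-m - 1) * max (1 - s / T) 0

variable {m T : ℝ}

lemma hasDerivAt_truncPow (hT : 0 < T) (s : ℝ) :
    HasDerivAt (truncPow m T) (truncPowDeriv m T s) s := by
  refine hasDerivAt_ite_le
    (f := fun s => T ^ (-m) * (1 - m * (s / T - 1) + m * (m + 1) / 2 * (s / T - 1) ^ 2))
    (g := fun s => s ^ (-m)) (f' := fun s => T ^ (-m - 1) * (-m + m * (m + 1) * (s / T - 1)))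
    (g' := fun s => -m * s ^ (-m - 1)) (fun s _ => ?_) (fun s hs => ?_) ?_ ?_ s
  · have h1 : HasDerivAt (fun s => s / T - 1) (1 / T) s :=
      ((hasDerivAt_id s).div_const T).sub_const 1
    have h2 := (((h1.const_mul m).const_sub 1).add ((h1.pow 2).const_mul (m * (m + 1) / 2))).const_mul
      (T ^ (-m))
    refine h2.congr_deriv ?_
    rw [rpow_sub_one hT.ne']
    norm_num
    field_simp
  · exact Real.hasDerivAt_rpow_const (Or.inl (hT.trans_le hs).ne')
  · simp [hT.ne']
  · simp only [div_self hT.ne']; ring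

lemma hasDerivAt_truncPowDeriv (hT : 0 < T) (s : ℝ) :
    HasDerivAt (truncPowDeriv m T) (truncPowDeriv2 m T s) s := by
  have := hasDerivAt_ite_le (f := fun s => T ^ (-m - 1) * (-m + m * (m + 1) * (s / T - 1)))
    (g := fun s => -m * s ^ (-m - 1)) (f' := fun s => m * (m + 1) * T ^ (-m - 2))
    (g' := fun s => m * (m + 1) * s ^ (-m - 2)) (T := T) (fun s _ => ?_) (fun s hs => ?_) ?_ rfl s
  · refine this.congr_deriv ?_
    unfold truncPowDeriv2
    split_ifs with h
    · rw [max_eq_right h]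
    · rw [max_eq_left (not_le.1 h).le]
  · have h1 : HasDerivAt (fun s => s / T - 1) (1 / T) s :=
      ((hasDerivAt_id s).div_const T).sub_const 1
    refine (((h1.const_mul (m * (m + 1))).const_add (-m)).const_mul (T ^ (-m - 1))).congr_deriv ?_
    rw [show -m - 2 = -m - 1 - 1 by ring, rpow_sub_one hT.ne' (-m - 1)]
    field_simp
  · refine ((Real.hasDerivAt_rpow_const (p := -m - 1)
      (Or.inl (hT.trans_le hs).ne')).const_mul (-m)).congr_deriv ?_
    rw [show -m - 1 - 1 = -m - 2 by ring]; ring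
  · simp only [div_self hT.ne']; ring

lemma continuous_truncPowDeriv2 (hT : 0 < T) : Continuous (truncPowDeriv2 m T) := by
  unfold truncPowDeriv2
  refine continuous_const.mul ((continuous_id.max continuous_const).rpow_const fun x => Or.inl ?_)
  exact (lt_max_of_lt_right hT).ne'

lemma continuous_truncPow (hT : 0 < T) : Continuous (truncPow m T) :=
  continuous_iff_continuousAt.2 fun s => (hasDerivAt_truncPow hT s).continuousAt

lemma continuous_bumpProfile : Continuous (bumpProfile m T) := by
  unfold bumpProfile; fun_prop

lemma contDiff_truncPow (hT : 0 < T) : ContDiff ℝ 2 (truncPow m T) := by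
  have h1 : deriv (truncPow m T) = truncPowDeriv m T :=
    funext fun s => (hasDerivAt_truncPow hT s).deriv
  have h2 : deriv (truncPowDeriv m T) = truncPowDeriv2 m T :=
    funext fun s => (hasDerivAt_truncPowDeriv hT s).deriv
  rw [show (2 : WithTop ℕ∞) = 1 + 1 by norm_num, contDiff_succ_iff_deriv, h1,
    contDiff_one_iff_deriv, h2]
  exact ⟨fun s => (hasDerivAt_truncPow hT s).differentiableAt, by simp,
    fun s => (hasDerivAt_truncPowDeriv hT s).differentiableAt, continuous_truncPowDeriv2 hT⟩

lemma bumpProfile_eq (hT : 0 < T) (s : ℝ) :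
    4 * s * truncPowDeriv2 m T s + 2 * (2 * m + 2) * truncPowDeriv m T s = -bumpProfile m T s := by
  unfold truncPowDeriv2 truncPowDeriv bumpProfile
  split_ifs with h
  · rw [max_eq_right h, max_eq_left (sub_nonneg.2 ((div_le_one hT).2 h)),
      show -m - 2 = -m - 1 - 1 by ring, rpow_sub_one hT.ne' (-m - 1)]
    field_simp
    ring
  · have hs : T < s := not_le.1 h
    rw [max_eq_left hs.le, max_eq_right (sub_nonpos.2 ((one_le_div hT).2 hs.le)),
      show -m - 2 = -m - 1 - 1 by ring, rpow_sub_one (hT.trans hs).ne' (-m - 1)]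
    have := (hT.trans hs).ne'
    field_simp
    ring

lemma truncPow_of_le {s : ℝ} (hT : 0 < T) (h : T ≤ s) : truncPow m T s = s ^ (-m) := by
  unfold truncPow
  split_ifs with hs
  · obtain rfl : s = T := le_antisymm hs h
    simp [hT.ne']
  · rfl

lemma truncPow_nonneg (hm : 0 < m) (hT : 0 < T) {s : ℝ} (hs : 0 ≤ s) : 0 ≤ truncPow m T s := by
  unfold truncPow
  split_ifs with h
  · have : s / T - 1 ≤ 0 := sub_nonpos.2 ((div_le_one hT).2 h)
    have := mul_nonneg hm.le (neg_nonneg.2 this)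
    have : 0 ≤ m * (m + 1) / 2 * (s / T - 1) ^ 2 := by positivity
    refine mul_nonneg (by positivity) (by linarith)
  · positivity

lemma taylor_le_rpow_neg (hm : 0 < m) {t : ℝ} (h0 : 0 ≤ t) (h1 : t < 1) :
    1 + m * t + m * (m + 1) / 2 * t ^ 2 ≤ (1 - t) ^ (-m) := by
  have hlog : t + t ^ 2 / 2 ≤ -log (1 - t) := by
    have := sum_le_hasSum (Finset.range 2) (fun i _ => by positivity)
      (hasSum_pow_div_log_of_abs_lt_one (abs_lt.2 ⟨by linarith, h1⟩))
    norm_num [Finset.sum_range_succ] at this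
    exact this
  rw [rpow_def_of_pos (by linarith)]
  have h2 : m * (t + t ^ 2 / 2) ≤ log (1 - t) * -m := by nlinarith
  refine le_trans ?_ ((quadratic_le_exp_of_nonneg (x := m * (t + t ^ 2 / 2)) (by positivity)).trans
    (exp_le_exp.2 h2))
  have : 0 ≤ m ^ 2 * (t ^ 3 + t ^ 4 / 4) := by positivity
  nlinarith

lemma truncPow_le (hm : 0 < m) (hT : 0 < T) {s : ℝ} (hs : 0 < s) : truncPow m T s ≤ s ^ (-m) := by
  unfold truncPow
  split_ifs with h
  · have h1 := taylor_le_rpow_neg hm (t := 1 - s / T) (sub_nonneg.2 ((div_le_one hT).2 h))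
      (by have : 0 < s / T := by positivity
          linarith)
    calc _ ≤ T ^ (-m) * (1 - (1 - s / T)) ^ (-m) := by
          refine mul_le_mul_of_nonneg_left (le_trans (le_of_eq ?_) h1) (by positivity)
          ring
      _ = s ^ (-m) := by
          rw [sub_sub_cancel, ← mul_rpow hT.le (by positivity), mul_div_cancel₀ _ hT.ne']
  · rfl

lemma tendsto_truncPow_atTop (hm : 0 < m) {s : ℝ} (hs : 0 ≤ s) :
    Tendsto (fun T => truncPow m T s) atTop (𝓝 0) := by
  have h1 : Tendsto (fun T : ℝ => T ^ (-m) * (1 + m + m * (m + 1) / 2)) atTop (𝓝 0) := by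
    simpa using (tendsto_rpow_neg_atTop hm).mul_const (1 + m + m * (m + 1) / 2)
  refine squeeze_zero' ?_ ?_ h1
  · filter_upwards [eventually_gt_atTop 0] with T hT using truncPow_nonneg hm hT hs
  · filter_upwards [eventually_gt_atTop 0, eventually_ge_atTop s] with T hT hsT
    rw [truncPow, if_pos hsT]
    have a1 : 0 ≤ s / T := by positivity
    have a2 : s / T ≤ 1 := (div_le_one hT).2 hsT
    refine mul_le_mul_of_nonneg_left ?_ (by positivity)
    have a3 : (s / T - 1) ^ 2 ≤ 1 := by nlinarith
    have a4 : m * (m + 1) / 2 * (s / T - 1) ^ 2 ≤ m * (m + 1) / 2 * 1 := by gcongr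
    nlinarith

lemma bumpProfile_nonneg (hm : 0 < m) (hT : 0 < T) (s : ℝ) : 0 ≤ bumpProfile m T s := by
  unfold bumpProfile; positivity

lemma bumpProfile_of_le {s : ℝ} (hT : 0 < T) (h : T ≤ s) : bumpProfile m T s = 0 := by
  rw [bumpProfile, max_eq_right (sub_nonpos.2 ((one_le_div hT).2 h)), mul_zero]

lemma bumpProfile_le (hm : 0 < m) (hT : 0 < T) {s : ℝ} (hs : 0 ≤ s) :
    bumpProfile m T s ≤ 4 * m * (m + 1) * (m + 2) * T ^ (-m - 1) := by
  unfold bumpProfile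
  refine mul_le_of_le_one_right (by positivity) (max_le ?_ zero_le_one)
  have : 0 ≤ s / T := by positivity
  linarith

end Profile
section Laplacian

variable {n : ℕ}

local notation "𝔼" => EuclideanSpace ℝ (Fin n)

lemma continuous_lap {u : 𝔼 → ℝ} (hu : ContDiff ℝ 2 u) : Continuous (lap u) := by
  unfold lap
  refine continuous_finsetSum _ fun i _ => ?_
  have h1 : ContDiff ℝ 1 (fun y => fderiv ℝ u y (EuclideanSpace.single i 1)) :=
    (hu.fderiv_right (m := 1) (by norm_num)).clm_apply contDiff_const
  exact (h1.continuous_fderiv (by norm_num)).clm_apply continuous_const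

lemma lap_comp_add_left (u : 𝔼 → ℝ) (x y : 𝔼) : lap (fun z => u (x + z)) y = lap u (x + y) := by
  unfold lap
  refine Finset.sum_congr rfl fun i _ => ?_
  have h1 : (fun y => fderiv ℝ (fun z => u (x + z)) y (EuclideanSpace.single i 1)) =
      fun y => (fun z => fderiv ℝ u z (EuclideanSpace.single i 1)) (x + y) := by
    ext y; rw [fderiv_comp_add_left]
  rw [h1, fderiv_comp_add_left (f := fun z => fderiv ℝ u z (EuclideanSpace.single i 1))]

lemma lap_radial {ψ ψ' ψ'' : ℝ → ℝ} (h1 : ∀ s, HasDerivAt ψ (ψ' s) s)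
    (h2 : ∀ s, HasDerivAt ψ' (ψ'' s) s) (y : 𝔼) :
    lap (fun z => ψ (‖z‖ ^ 2)) y = 4 * ‖y‖ ^ 2 * ψ'' (‖y‖ ^ 2) + 2 * n * ψ' (‖y‖ ^ 2) := by
  have hsq : ∀ z : 𝔼, HasFDerivAt (fun z : 𝔼 => ‖z‖ ^ 2) (2 • innerSL ℝ z) z := fun z =>
    (hasStrictFDerivAt_norm_sq z).hasFDerivAt
  have hterm : ∀ i : Fin n,
      fderiv ℝ (fun z => fderiv ℝ (fun z : 𝔼 => ψ (‖z‖ ^ 2)) z (EuclideanSpace.single i 1)) y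
        (EuclideanSpace.single i 1) = 4 * ψ'' (‖y‖ ^ 2) * y i ^ 2 + 2 * ψ' (‖y‖ ^ 2) := by
    intro i
    have e1 : (fun z => fderiv ℝ (fun z : 𝔼 => ψ (‖z‖ ^ 2)) z (EuclideanSpace.single i 1)) =
        fun z => ψ' (‖z‖ ^ 2) * (2 * z i) := by
      ext z
      have h : HasFDerivAt (fun z : 𝔼 => ψ (‖z‖ ^ 2)) (ψ' (‖z‖ ^ 2) • 2 • innerSL ℝ z) z :=
        (h1 (‖z‖ ^ 2)).comp_hasFDerivAt z (hsq z)
      rw [h.fderiv]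
      simp [EuclideanSpace.inner_single_right]
    have e2 : HasFDerivAt (fun z : 𝔼 => 2 * z i)
        ((2 : ℝ) • (EuclideanSpace.proj i : 𝔼 →L[ℝ] ℝ)) y :=
      ((EuclideanSpace.proj i : 𝔼 →L[ℝ] ℝ).hasFDerivAt).const_mul 2
    have e3 : HasFDerivAt (fun z : 𝔼 => ψ' (‖z‖ ^ 2)) (ψ'' (‖y‖ ^ 2) • 2 • innerSL ℝ y) y :=
      (h2 (‖y‖ ^ 2)).comp_hasFDerivAt y (hsq y)
    rw [e1, (e3.fun_mul e2).fderiv]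
    simp [EuclideanSpace.inner_single_right]
    ring
  unfold lap
  rw [Finset.sum_congr rfl fun i _ => hterm i, Finset.sum_add_distrib, ← Finset.mul_sum,
    ← EuclideanSpace.real_norm_sq_eq]
  simp
  ring

lemma integral_mul_lap {u φ : 𝔼 → ℝ} (hu : ContDiff ℝ 2 u) (hφ : ContDiff ℝ 2 φ)
    (hc : HasCompactSupport φ) : ∫ y, u y * lap φ y = ∫ y, lap u y * φ y := by
  have c1 : ∀ {w : 𝔼 → ℝ}, ContDiff ℝ 2 w → ∀ v,
      ContDiff ℝ 1 (fun y => fderiv ℝ w y v) := fun hw v =>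
    (hw.fderiv_right (m := 1) (by norm_num)).clm_apply contDiff_const
  have c2 : ∀ {w : 𝔼 → ℝ}, ContDiff ℝ 2 w → ∀ v,
      Continuous (fun x => fderiv ℝ (fun y => fderiv ℝ w y v) x v) := fun hw v =>
    ((c1 hw v).continuous_fderiv (by norm_num)).clm_apply continuous_const
  have s1 : ∀ v, HasCompactSupport (fun y => fderiv ℝ φ y v) := fun v => hc.fderiv_apply ℝ v
  have s2 : ∀ v, HasCompactSupport (fun x => fderiv ℝ (fun y => fderiv ℝ φ y v) x v) :=
    fun v => (s1 v).fderiv_apply ℝ v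
  have i1 : ∀ v, Integrable (fun x => u x * fderiv ℝ (fun y => fderiv ℝ φ y v) x v) := fun v =>
    (hu.continuous.mul (c2 hφ v)).integrable_of_hasCompactSupport (s2 v).mul_left
  have i2 : ∀ v, Integrable (fun x => fderiv ℝ (fun y => fderiv ℝ u y v) x v * φ x) := fun v =>
    ((c2 hu v).mul hφ.continuous).integrable_of_hasCompactSupport hc.mul_left
  have i3 : ∀ v, Integrable (fun x => fderiv ℝ u x v * fderiv ℝ φ x v) := fun v =>
    ((c1 hu v).continuous.mul (c1 hφ v).continuous).integrable_of_hasCompactSupport (s1 v).mul_left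
  have i4 : ∀ v, Integrable (fun x => u x * fderiv ℝ φ x v) := fun v =>
    (hu.continuous.mul (c1 hφ v).continuous).integrable_of_hasCompactSupport (s1 v).mul_left
  have i5 : ∀ v, Integrable (fun x => fderiv ℝ u x v * φ x) := fun v =>
    ((c1 hu v).continuous.mul hφ.continuous).integrable_of_hasCompactSupport hc.mul_left
  unfold lap
  simp only [Finset.mul_sum, Finset.sum_mul]
  rw [integral_finsetSum _ fun i _ => i1 _, integral_finsetSum _ fun i _ => i2 _]
  refine Finset.sum_congr rfl fun i _ => ?_
  rw [integral_mul_fderiv_eq_neg_fderiv_mul_of_integrable (i3 _) (i1 _) (i4 _)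
      (fun x _ => (hu.differentiable (by norm_num)) x)
      (fun x _ => ((c1 hφ _).differentiable (by norm_num)) x),
    integral_mul_fderiv_eq_neg_fderiv_mul_of_integrable (i2 _) (i3 _) (i5 _)
      (fun x _ => ((c1 hu _).differentiable (by norm_num)) x)
      (fun x _ => (hφ.differentiable (by norm_num)) x), neg_neg]

end Laplacian
section Kernel

open Set Topology

variable {n : ℕ} {m T R : ℝ}

local notation "𝔼" => EuclideanSpace ℝ (Fin n)

/-- The compactly supported radial kernel `y ↦ bumpProfile m T (‖y‖ ^ 2)`. -/
noncomputable def bump (m T : ℝ) (y : 𝔼) : ℝ := bumpProfile m T (‖y‖ ^ 2)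

/-- The fundamental solution of the Laplacian, up to a multiplicative constant. -/
noncomputable def newtonKernel (m : ℝ) (y : 𝔼) : ℝ := (‖y‖ ^ 2) ^ (-m)

/-- The fundamental solution, smoothed out in the ball of radius `√T`. -/
noncomputable def truncKernel (m T : ℝ) (y : 𝔼) : ℝ := truncPow m T (‖y‖ ^ 2)

/-- The total mass of `bump m T`. -/
noncomputable def bumpMass (n : ℕ) : ℝ :=
  (n : ℝ) * ((n : ℝ) - 2) * (volume (Metric.ball (0 : EuclideanSpace ℝ (Fin n)) 1)).toReal

lemma continuous_bump : Continuous (bump m T : 𝔼 → ℝ) :=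
  continuous_bumpProfile.comp (continuous_norm.pow 2)

lemma bump_nonneg (hm : 0 < m) (hT : 0 < T) (y : 𝔼) : 0 ≤ bump m T y :=
  bumpProfile_nonneg hm hT _

lemma bump_of_le (hT : 0 < T) {y : 𝔼} (h : T ≤ ‖y‖ ^ 2) : bump m T y = 0 :=
  bumpProfile_of_le hT h

lemma bump_le (hm : 0 < m) (hT : 0 < T) (y : 𝔼) :
    bump m T y ≤ 4 * m * (m + 1) * (m + 2) * T ^ (-m - 1) :=
  bumpProfile_le hm hT (sq_nonneg _)

lemma hasCompactSupport_bump (hT : 0 < T) : HasCompactSupport (bump m T : 𝔼 → ℝ) := by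
  refine HasCompactSupport.intro (isCompact_closedBall (0 : 𝔼) √T) fun y hy => bump_of_le hT ?_
  rw [Metric.mem_closedBall, dist_zero_right, not_le] at hy
  exact (Real.sqrt_le_left (norm_nonneg y)).1 hy.le

lemma integrable_mul_bump {v : 𝔼 → ℝ} (hv : Continuous v) (hT : 0 < T) :
    Integrable (fun y => v y * bump m T y) :=
  (hv.mul continuous_bump).integrable_of_hasCompactSupport (hasCompactSupport_bump hT).mul_left

lemma integral_bump (hn : 3 ≤ n) (hmn : (n : ℝ) = 2 * m + 2) (hT : 0 < T) :
    ∫ y : 𝔼, bump m T y = bumpMass n := by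
  have : Nonempty (Fin n) := ⟨⟨0, by omega⟩⟩
  have hn3 : (3 : ℝ) ≤ n := by exact_mod_cast hn
  have hρ : 0 < √T := Real.sqrt_pos.2 hT
  set ρ := √T with hρd
  have hTρ : T = ρ ^ 2 := (Real.sq_sqrt hT.le).symm
  have hpow : T ^ (-m - 1) = (ρ ^ n)⁻¹ := by
    rw [hTρ, ← rpow_natCast ρ 2, ← rpow_mul hρ.le, ← rpow_natCast, ← rpow_neg hρ.le]
    congr 1
    rw [hmn]; push_cast; ring
  obtain ⟨k, rfl⟩ : ∃ k, n = k + 1 := ⟨n - 1, by omega⟩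
  have h1 : ∫ y : EuclideanSpace ℝ (Fin (k + 1)), bump m T y =
      ∫ y : EuclideanSpace ℝ (Fin (k + 1)), (fun r => bumpProfile m T (r ^ 2)) ‖y‖ := rfl
  have h2 : ∫ r in Ioi (0 : ℝ), r ^ k * bumpProfile m T (r ^ 2) =
      4 * m * (m + 1) * (m + 2) * T ^ (-m - 1) *
        (ρ ^ (k + 1) / (k + 1) - ρ ^ (k + 3) / (k + 3) / T) := by
    have e1 : ∫ r in Ioi (0 : ℝ), r ^ k * bumpProfile m T (r ^ 2) =
        ∫ r in Ioc (0 : ℝ) ρ, r ^ k * bumpProfile m T (r ^ 2) := by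
      refine setIntegral_eq_of_subset_of_forall_sdiff_eq_zero measurableSet_Ioi
        Ioc_subset_Ioi_self fun r hr => ?_
      have : ρ < r := by
        by_contra h
        exact hr.2 ⟨hr.1, not_lt.1 h⟩
      rw [bumpProfile_of_le hT, mul_zero]
      rw [hTρ]; gcongr
    have e2 : ∫ r in Ioc (0 : ℝ) ρ, r ^ k * bumpProfile m T (r ^ 2) =
        ∫ r in Ioc (0 : ℝ) ρ, 4 * m * (m + 1) * (m + 2) * T ^ (-m - 1) *
          (r ^ k - r ^ (k + 2) / T) := by
      refine setIntegral_congr_fun measurableSet_Ioc fun r hr => ?_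
      have : r ^ 2 ≤ T := by
        rw [hTρ]; have := hr.1.le; have := hr.2; gcongr
      simp only [bumpProfile]
      rw [max_eq_left (sub_nonneg.2 ((div_le_one hT).2 this))]
      ring
    rw [e1, e2, ← intervalIntegral.integral_of_le hρ.le, intervalIntegral.integral_const_mul,
      intervalIntegral.integral_sub (by simp) (by simp), intervalIntegral.integral_div,
      integral_pow, integral_pow]
    have hz : (0 : ℝ) ^ (k + 2 + 1) = 0 := zero_pow (by omega)
    have hz' : (0 : ℝ) ^ (k + 1) = 0 := zero_pow (by omega)
    rw [hz, hz']
    push_cast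
    ring
  rw [h1, integral_fun_norm_addHaar volume (fun r => bumpProfile m T (r ^ 2))]
  simp only [finrank_euclideanSpace, Fintype.card_fin, Nat.add_sub_cancel, smul_eq_mul,
    nsmul_eq_mul]
  rw [h2, hpow, bumpMass, Measure.real, hTρ]
  have hk : (k : ℝ) = 2 * m + 1 := by push_cast at hmn; linarith
  have hm : 0 < m := by rw [hmn] at hn3; linarith
  push_cast
  rw [hk]
  field_simp
  ring

lemma bumpMass_pos (hn : 3 ≤ n) : 0 < bumpMass n := by
  have hn3 : (3 : ℝ) ≤ n := by exact_mod_cast hn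
  have : 0 < (volume (Metric.ball (0 : 𝔼) 1)).toReal :=
    ENNReal.toReal_pos (Metric.measure_ball_pos _ _ one_pos).ne' measure_ball_lt_top.ne
  unfold bumpMass
  have : (0 : ℝ) < n - 2 := by linarith
  positivity

lemma integral_bump_sub_eq {u : 𝔼 → ℝ} (hmn : (n : ℝ) = 2 * m + 2) (hu : ContDiff ℝ 2 u)
    (x : 𝔼) (hT : 0 < T) (hTR : T ≤ R) :
    (∫ y, u (x + y) * bump m T y) - ∫ y, u (x + y) * bump m R y =
      ∫ y, -lap u (x + y) * (truncKernel m T y - truncKernel m R y) := by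
  have hR : 0 < R := hT.trans_le hTR
  have hu' : ContDiff ℝ 2 (fun y => u (x + y)) := hu.comp (contDiff_const.add contDiff_id)
  have hφ : ContDiff ℝ 2 (fun y : 𝔼 => truncPow m T (‖y‖ ^ 2) - truncPow m R (‖y‖ ^ 2)) :=
    ((contDiff_truncPow hT).comp (contDiff_norm_sq ℝ)).sub
      ((contDiff_truncPow hR).comp (contDiff_norm_sq ℝ))
  have hc : HasCompactSupport
      (fun y : 𝔼 => truncPow m T (‖y‖ ^ 2) - truncPow m R (‖y‖ ^ 2)) := by
    refine HasCompactSupport.intro (isCompact_closedBall (0 : 𝔼) √R) fun y hy => ?_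
    rw [Metric.mem_closedBall, dist_zero_right, not_le] at hy
    have := (Real.sqrt_le_left (norm_nonneg y)).1 hy.le
    rw [truncPow_of_le hR this, truncPow_of_le hT (hTR.trans this), sub_self]
  have hlap : ∀ y : 𝔼, lap (fun y : 𝔼 => truncPow m T (‖y‖ ^ 2) - truncPow m R (‖y‖ ^ 2)) y =
      -(bump m T y - bump m R y) := by
    intro y
    rw [lap_radial (ψ := fun s => truncPow m T s - truncPow m R s)
      (fun s => (hasDerivAt_truncPow hT s).fun_sub (hasDerivAt_truncPow hR s))
      (fun s => (hasDerivAt_truncPowDeriv hT s).fun_sub (hasDerivAt_truncPowDeriv hR s)), hmn]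
    have e1 := bumpProfile_eq (m := m) hT (‖y‖ ^ 2)
    have e2 := bumpProfile_eq (m := m) hR (‖y‖ ^ 2)
    unfold bump
    linarith
  have key := integral_mul_lap hu' hφ hc
  simp only [hlap, lap_comp_add_left] at key
  rw [← integral_sub (integrable_mul_bump hu'.continuous hT)
    (integrable_mul_bump hu'.continuous hR), ← neg_inj, ← integral_neg, ← integral_neg]
  convert key using 2
  · ext y; ring
  · ext y; simp only [truncKernel]; ring

lemma tendsto_integral_mul_bump {v : 𝔼 → ℝ} (hn : 3 ≤ n) (hmn : (n : ℝ) = 2 * m + 2)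
    (hv : Continuous v) (x : 𝔼) :
    Tendsto (fun T => ∫ y, v (x + y) * bump m T y) (𝓝[>] 0) (𝓝 (bumpMass n * v x)) := by
  have hn3 : (3 : ℝ) ≤ n := by exact_mod_cast hn
  have hm : 0 < m := by rw [hmn] at hn3; linarith
  have hA := bumpMass_pos hn
  rw [Metric.tendsto_nhds]
  intro ε hε
  have hε' : 0 < ε / (2 * bumpMass n) := by positivity
  obtain ⟨d, hd, hvd⟩ := Metric.continuousAt_iff.1 (hv.continuousAt (x := x)) _ hε'
  filter_upwards [Ioo_mem_nhdsGT (show (0 : ℝ) < d ^ 2 by positivity)] with T hT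
  have hv' : Continuous fun y => v (x + y) := by fun_prop
  have e1 : (∫ y, v (x + y) * bump m T y) - bumpMass n * v x =
      ∫ y, (v (x + y) - v x) * bump m T y := by
    rw [← integral_bump hn hmn hT.1, mul_comm, ← integral_const_mul,
      ← integral_sub (integrable_mul_bump hv' hT.1) (integrable_mul_bump continuous_const hT.1)]
    simp only [sub_mul]
  rw [dist_eq_norm, e1]
  calc _ ≤ ∫ y : 𝔼, ε / (2 * bumpMass n) * bump m T y := by
        refine norm_integral_le_of_norm_le (integrable_mul_bump continuous_const hT.1)
          (ae_of_all _ fun y => ?_)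
        rw [norm_mul, Real.norm_of_nonneg (bump_nonneg hm hT.1 y)]
        by_cases hy : T ≤ ‖y‖ ^ 2
        · rw [bump_of_le hT.1 hy, mul_zero, mul_zero]
        · refine mul_le_mul_of_nonneg_right ?_ (bump_nonneg hm hT.1 y)
          have h1 : ‖y‖ ^ 2 < d ^ 2 := (not_le.1 hy).trans hT.2
          have h2 : ‖y‖ < d := lt_of_pow_lt_pow_left₀ 2 hd.le h1
          have := hvd (x := x + y) (by simpa [dist_eq_norm] using h2)
          rw [dist_eq_norm] at this
          exact this.le
    _ = ε / 2 := by
        rw [integral_const_mul, integral_bump hn hmn hT.1]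
        field_simp
    _ < ε := half_lt_self hε

lemma measurable_newtonKernel : Measurable (newtonKernel m : 𝔼 → ℝ) := by
  unfold newtonKernel; fun_prop

lemma newtonKernel_nonneg (y : 𝔼) : 0 ≤ newtonKernel m y := by
  unfold newtonKernel; positivity

lemma truncKernel_nonneg (hm : 0 < m) (hT : 0 < T) (y : 𝔼) : 0 ≤ truncKernel m T y :=
  truncPow_nonneg hm hT (sq_nonneg _)

lemma truncKernel_le (hm : 0 < m) (hT : 0 < T) {y : 𝔼} (hy : y ≠ 0) :
    truncKernel m T y ≤ newtonKernel m y :=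
  truncPow_le hm hT (by have := norm_pos_iff.2 hy; positivity)

lemma continuous_truncKernel (hT : 0 < T) : Continuous (truncKernel m T : 𝔼 → ℝ) :=
  (continuous_truncPow hT).comp (continuous_norm.pow 2)

lemma truncKernel_of_le (hT : 0 < T) {y : 𝔼} (h : T ≤ ‖y‖ ^ 2) :
    truncKernel m T y = newtonKernel m y := truncPow_of_le hT h

lemma ae_ne_zero (hn : 3 ≤ n) : ∀ᵐ y : 𝔼, y ≠ 0 := by
  have : Nonempty (Fin n) := ⟨⟨0, by omega⟩⟩
  exact Measure.ae_ne volume 0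

lemma integrableOn_newtonKernel (hn : 3 ≤ n) (hmn : (n : ℝ) = 2 * m + 2) (r : ℝ) :
    IntegrableOn (newtonKernel m : 𝔼 → ℝ) (Metric.ball 0 r) := by
  have : Nonempty (Fin n) := ⟨⟨0, by omega⟩⟩
  refine (integrableOn_fun_norm_addHaar volume (f := fun r : ℝ => (r ^ 2) ^ (-m))).2 ?_
  have h2 : IntegrableOn (fun y : ℝ => y) (Ioo 0 r) :=
    (continuous_id.integrableOn_Icc (a := 0) (b := r)).mono_set Ioo_subset_Icc_self
  refine h2.congr_fun (fun y hy => ?_) measurableSet_Ioo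
  have hy0 : 0 < y := hy.1
  simp only [finrank_euclideanSpace, Fintype.card_fin, smul_eq_mul]
  rw [← rpow_natCast y 2, ← rpow_mul hy0.le, ← rpow_natCast y (n - 1), ← rpow_add hy0,
    Nat.cast_sub (by omega), hmn]
  push_cast
  rw [show 2 * m + 2 - 1 + 2 * -m = 1 by ring, rpow_one]

lemma integrable_mul_newtonKernel {v : 𝔼 → ℝ} (hn : 3 ≤ n) (hmn : (n : ℝ) = 2 * m + 2)
    (hv : Continuous v) (hc : HasCompactSupport v) :
    Integrable (fun y => v y * newtonKernel m y) := by
  obtain ⟨r, hr⟩ := hc.isCompact.isBounded.subset_ball 0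
  obtain ⟨C, hC⟩ := hv.bounded_above_of_compact_support hc
  have h := ((integrableOn_newtonKernel hn hmn r).bdd_mul (c := C)
    hv.aestronglyMeasurable.restrict (ae_of_all _ hC))
  refine (integrableOn_iff_integrable_of_support_subset fun y hy => hr ?_).1 h
  refine subset_tsupport _ fun h0 => hy ?_
  simp [h0]

end Kernel
section Representation

open Set Topology

variable {n : ℕ} {m T R b : ℝ}

local notation "𝔼" => EuclideanSpace ℝ (Fin n)

/-- A consequence of Fatou's lemma: an almost everywhere limit of nonnegative functions with
bounded integrals is integrable. -/
lemma integrable_of_tendsto_of_integral_le {β : Type*} [MeasurableSpace β] {μ : Measure β}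
    {F : ℕ → β → ℝ} {G : β → ℝ} {C : ℝ} (hF : ∀ k, Integrable (F k) μ)
    (h0 : ∀ k, ∀ᵐ y ∂μ, 0 ≤ F k y) (hC : ∀ k, ∫ y, F k y ∂μ ≤ C)
    (hlim : ∀ᵐ y ∂μ, Tendsto (fun k => F k y) atTop (𝓝 (G y))) : Integrable G μ := by
  refine ⟨aestronglyMeasurable_of_tendsto_ae _ (fun k => (hF k).aestronglyMeasurable) hlim, ?_⟩
  have h1 : ∫⁻ y, ‖G y‖ₑ ∂μ ≤ liminf (fun k => ∫⁻ y, ‖F k y‖ₑ ∂μ) atTop := by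
    rw [lintegral_congr_ae (by filter_upwards [hlim] with y hy using hy.enorm.liminf_eq.symm)]
    exact lintegral_liminf_le' fun k => (hF k).aestronglyMeasurable.enorm
  have h2 : ∀ k, ∫⁻ y, ‖F k y‖ₑ ∂μ ≤ ENNReal.ofReal C := fun k => by
    rw [lintegral_congr_ae (g := fun y => ENNReal.ofReal (F k y))
      (by filter_upwards [h0 k] with y hy using Real.enorm_of_nonneg hy),
      ← ofReal_integral_eq_lintegral_ofReal (hF k) (h0 k)]
    exact ENNReal.ofReal_le_ofReal (hC k)
  refine (h1.trans (liminf_le_of_le (by isBoundedDefault) fun c hc => ?_)).trans_lt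
    (ENNReal.ofReal_lt_top (r := C))
  obtain ⟨k, hk⟩ := hc.exists
  exact hk.trans (h2 k)

lemma newtonKernel_sub_truncKernel_nonneg (hn : 3 ≤ n) (hm : 0 < m) (hT : 0 < T) :
    ∀ᵐ y : 𝔼, 0 ≤ newtonKernel m y - truncKernel m T y := by
  filter_upwards [ae_ne_zero hn] with y hy using sub_nonneg.2 (truncKernel_le hm hT hy)

lemma norm_mul_sub_truncKernel_le (hn : 3 ≤ n) (hm : 0 < m) (hT : 0 < T) (h : 𝔼 → ℝ) :
    ∀ᵐ y : 𝔼, ‖h y * (newtonKernel m y - truncKernel m T y)‖ ≤ ‖h y * newtonKernel m y‖ := by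
  filter_upwards [newtonKernel_sub_truncKernel_nonneg hn hm hT] with y hy
  rw [norm_mul, norm_mul]
  refine mul_le_mul_of_nonneg_left ?_ (norm_nonneg _)
  rw [Real.norm_of_nonneg hy, Real.norm_of_nonneg (newtonKernel_nonneg y)]
  linarith [truncKernel_nonneg hm hT y]

lemma integrable_indicator_mul_newtonKernel (hn : 3 ≤ n) (hmn : (n : ℝ) = 2 * m + 2) {h : 𝔼 → ℝ}
    (hh : Continuous h) (r : ℝ) :
    Integrable ((Metric.ball (0 : 𝔼) r).indicator fun y => h y * newtonKernel m y) := by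
  rw [integrable_indicator_iff measurableSet_ball]
  obtain ⟨C, hC⟩ := (isCompact_closedBall (0 : 𝔼) r).exists_bound_of_continuousOn hh.continuousOn
  refine (integrableOn_newtonKernel hn hmn r).bdd_mul (c := C) hh.aestronglyMeasurable.restrict ?_
  filter_upwards [ae_restrict_mem measurableSet_ball] with y hy
    using hC y (Metric.ball_subset_closedBall hy)

lemma norm_mul_sub_truncKernel_le_indicator (hn : 3 ≤ n) (hm : 0 < m) (hT : 0 < T) {r : ℝ}
    (hr : 0 ≤ r) (hTr : T ≤ r ^ 2) (h : 𝔼 → ℝ) :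
    ∀ᵐ y : 𝔼, ‖h y * (newtonKernel m y - truncKernel m T y)‖ ≤
      ‖(Metric.ball (0 : 𝔼) r).indicator (fun y => h y * newtonKernel m y) y‖ := by
  filter_upwards [norm_mul_sub_truncKernel_le hn hm hT h] with y hy
  by_cases hyr : y ∈ Metric.ball (0 : 𝔼) r
  · rwa [indicator_of_mem hyr]
  · rw [Metric.mem_ball, dist_zero_right, not_lt] at hyr
    rw [truncKernel_of_le hT (hTr.trans (by gcongr)), sub_self, mul_zero, norm_zero]
    exact norm_nonneg _

lemma aestronglyMeasurable_mul_sub_truncKernel (hT : 0 < T) {h : 𝔼 → ℝ} (hh : Continuous h) :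
    AEStronglyMeasurable (fun y => h y * (newtonKernel m y - truncKernel m T y)) volume :=
  (hh.measurable.mul (measurable_newtonKernel.sub
    (continuous_truncKernel hT).measurable)).aestronglyMeasurable

lemma integrable_mul_sub_truncKernel (hn : 3 ≤ n) (hmn : (n : ℝ) = 2 * m + 2) (hm : 0 < m)
    {h : 𝔼 → ℝ} (hh : Continuous h) (hT : 0 < T) :
    Integrable (fun y => h y * (newtonKernel m y - truncKernel m T y)) :=
  (integrable_indicator_mul_newtonKernel hn hmn hh √T).mono
    (aestronglyMeasurable_mul_sub_truncKernel hT hh)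
    (norm_mul_sub_truncKernel_le_indicator hn hm hT (Real.sqrt_nonneg _) (Real.sq_sqrt hT.le).ge h)

lemma tendsto_integral_mul_sub_truncKernel_zero (hn : 3 ≤ n) (hmn : (n : ℝ) = 2 * m + 2)
    (hm : 0 < m) {h : 𝔼 → ℝ} (hh : Continuous h) :
    Tendsto (fun T => ∫ y, h y * (newtonKernel m y - truncKernel m T y)) (𝓝[>] 0) (𝓝 0) := by
  suffices Tendsto (fun T => ∫ y, h y * (newtonKernel m y - truncKernel m T y)) (𝓝[>] 0)
      (𝓝 (∫ _y : 𝔼, (0 : ℝ))) by simpa only [integral_zero] using this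
  refine tendsto_integral_filter_of_dominated_convergence
    (fun y => ‖(Metric.ball (0 : 𝔼) 1).indicator (fun y => h y * newtonKernel m y) y‖)
    ?_ ?_ (integrable_indicator_mul_newtonKernel hn hmn hh 1).norm ?_
  · filter_upwards [self_mem_nhdsWithin] with T hT
      using aestronglyMeasurable_mul_sub_truncKernel hT hh
  · filter_upwards [Ioo_mem_nhdsGT (zero_lt_one' ℝ)] with T hT using
      norm_mul_sub_truncKernel_le_indicator hn hm hT.1 zero_le_one (by simpa using hT.2.le) h
  · filter_upwards [ae_ne_zero hn] with y hy
    refine tendsto_const_nhds.congr' ?_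
    have : 0 < ‖y‖ ^ 2 := by have := norm_pos_iff.2 hy; positivity
    filter_upwards [Ioo_mem_nhdsGT this] with T hT
    rw [truncKernel_of_le hT.1 hT.2.le, sub_self, mul_zero]

lemma tendsto_integral_mul_sub_truncKernel_atTop (hn : 3 ≤ n) (hm : 0 < m) {h : 𝔼 → ℝ}
    (hh : Continuous h) (hi : Integrable fun y => h y * newtonKernel m y) :
    Tendsto (fun T => ∫ y, h y * (newtonKernel m y - truncKernel m T y)) atTop
      (𝓝 (∫ y, h y * newtonKernel m y)) := by
  refine tendsto_integral_filter_of_dominated_convergence _ ?_ ?_ hi.norm ?_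
  · filter_upwards [eventually_gt_atTop 0] with T hT
      using aestronglyMeasurable_mul_sub_truncKernel hT hh
  · filter_upwards [eventually_gt_atTop 0] with T hT using norm_mul_sub_truncKernel_le hn hm hT h
  · refine ae_of_all _ fun y => ?_
    simpa [truncKernel] using ((tendsto_truncPow_atTop hm (sq_nonneg ‖y‖)).const_sub
      (newtonKernel m y)).const_mul (h y)

/-- Green's representation formula on a ball of radius `√R`. -/
lemma bumpMass_mul_sub_eq {u : 𝔼 → ℝ} (hn : 3 ≤ n) (hmn : (n : ℝ) = 2 * m + 2) (hm : 0 < m)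
    (hu : ContDiff ℝ 2 u) (x : 𝔼) (hR : 0 < R) :
    bumpMass n * u x - ∫ y, u (x + y) * bump m R y =
      ∫ y, -lap u (x + y) * (newtonKernel m y - truncKernel m R y) := by
  have hh : Continuous fun y => -lap u (x + y) := ((continuous_lap hu).comp (by fun_prop)).neg
  have h1 := (tendsto_integral_mul_bump hn hmn hu.continuous x).sub_const
    (∫ y, u (x + y) * bump m R y)
  have h2 := (tendsto_integral_mul_sub_truncKernel_zero hn hmn hm hh).const_sub
    (∫ y, -lap u (x + y) * (newtonKernel m y - truncKernel m R y))
  rw [sub_zero] at h2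
  refine tendsto_nhds_unique (h1.congr' ?_) h2
  filter_upwards [Ioo_mem_nhdsGT hR] with T hT
  rw [integral_bump_sub_eq hmn hu x hT.1 hT.2.le,
    ← integral_sub (integrable_mul_sub_truncKernel hn hmn hm hh hR)
    (integrable_mul_sub_truncKernel hn hmn hm hh hT.1)]
  congr 1
  ext y; ring

lemma tendsto_integral_compactSupport_mul_bump (hm : 0 < m) {w : 𝔼 → ℝ} (hw : Continuous w)
    (hc : HasCompactSupport w) (x : 𝔼) :
    Tendsto (fun R => ∫ y, w (x + y) * bump m R y) atTop (𝓝 0) := by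
  have hi : Integrable fun y => w (x + y) :=
    (hw.integrable_of_hasCompactSupport hc).comp_add_left x
  have hlim : Tendsto (fun R : ℝ => 4 * m * (m + 1) * (m + 2) * R ^ (-m - 1) * ∫ y, ‖w (x + y)‖)
      atTop (𝓝 0) := by
    have h1 : Tendsto (fun R : ℝ => R ^ (-m - 1)) atTop (𝓝 0) := by
      have := tendsto_rpow_neg_atTop (show 0 < m + 1 by linarith)
      simpa only [neg_add'] using this
    simpa using (h1.const_mul (4 * m * (m + 1) * (m + 2))).mul_const (∫ y, ‖w (x + y)‖)
  refine squeeze_zero_norm' ?_ hlim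
  filter_upwards [eventually_gt_atTop 0] with R hR
  rw [← integral_const_mul]
  refine norm_integral_le_of_norm_le (hi.norm.const_mul _) (ae_of_all _ fun y => ?_)
  rw [norm_mul, Real.norm_of_nonneg (bump_nonneg hm hR y), mul_comm]
  exact mul_le_mul_of_nonneg_right (bump_le hm hR y) (norm_nonneg _)

lemma hasCompactSupport_max_zero {w : 𝔼 → ℝ} {K : Set 𝔼} (hK : IsCompact K)
    (h : ∀ y ∉ K, w y ≤ 0) : HasCompactSupport fun y => max (w y) 0 :=
  HasCompactSupport.intro hK fun y hy => max_eq_right (h y hy)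

lemma le_integral_mul_bump {u : 𝔼 → ℝ} (hn : 3 ≤ n) (hmn : (n : ℝ) = 2 * m + 2) (hm : 0 < m)
    (hu : Continuous u) (x : 𝔼) (hR : 0 < R) :
    bumpMass n * b - ∫ y, max (b - u (x + y)) 0 * bump m R y ≤ ∫ y, u (x + y) * bump m R y := by
  have hu' : Continuous fun y => u (x + y) := by fun_prop
  rw [← integral_bump hn hmn hR, mul_comm, ← integral_const_mul,
    ← integral_sub (integrable_mul_bump continuous_const hR)
      (integrable_mul_bump (by fun_prop) hR)]
  refine integral_mono ((integrable_mul_bump continuous_const hR).sub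
      (integrable_mul_bump (by fun_prop) hR)) (integrable_mul_bump hu' hR) fun y => ?_
  have := le_max_left (b - u (x + y)) 0
  simp only
  rw [← sub_mul]
  exact mul_le_mul_of_nonneg_right (by linarith) (bump_nonneg hm hR y)

lemma integrable_lap_mul_newtonKernel {u : 𝔼 → ℝ} {K L : Set 𝔼} (hn : 3 ≤ n)
    (hmn : (n : ℝ) = 2 * m + 2) (hm : 0 < m) (hu : ContDiff ℝ 2 u) (hK : IsCompact K)
    (hf : ∀ y ∉ K, 0 ≤ -lap u y) (hL : IsCompact L) (hb : ∀ y ∉ L, b ≤ u y) (x : 𝔼) :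
    Integrable fun y => -lap u (x + y) * newtonKernel m y := by
  have hlc : Continuous fun y => lap u (x + y) := (continuous_lap hu).comp (by fun_prop)
  have huc := hu.continuous
  have hfnc : HasCompactSupport fun y => max (lap u (x + y)) 0 :=
    (hasCompactSupport_max_zero (w := lap u) hK fun y hy => by
      linarith [hf y hy]).comp_homeomorph (Homeomorph.addLeft x)
  have hfn : Integrable fun y => max (lap u (x + y)) 0 * newtonKernel m y :=
    integrable_mul_newtonKernel hn hmn (by fun_prop) hfnc
  have hneg := tendsto_integral_compactSupport_mul_bump hm (w := fun y => max (b - u y) 0)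
    (by fun_prop) (hasCompactSupport_max_zero hL fun y hy => by linarith [hb y hy]) x
  obtain ⟨N, hN⟩ := eventually_atTop.1 (hneg.eventually (eventually_le_nhds zero_lt_one))
  set Rk : ℕ → ℝ := fun k => max N 1 + k with hRk
  have hRpos : ∀ k, 0 < Rk k := fun k => by
    have : (0 : ℝ) ≤ k := k.cast_nonneg
    have := le_max_right N 1
    simp only [hRk]; linarith
  have hRN : ∀ k, N ≤ Rk k := fun k => by
    have : (0 : ℝ) ≤ k := k.cast_nonneg
    have := le_max_left N 1
    simp only [hRk]; linarith
  have hRlim : Tendsto Rk atTop atTop :=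
    tendsto_atTop_add_const_left _ _ tendsto_natCast_atTop_atTop
  have hfp : Integrable fun y => max (-lap u (x + y)) 0 * newtonKernel m y := by
    refine integrable_of_tendsto_of_integral_le
      (F := fun k y => max (-lap u (x + y)) 0 * (newtonKernel m y - truncKernel m (Rk k) y))
      (C := bumpMass n * u x - (bumpMass n * b - 1) +
        ∫ y, max (lap u (x + y)) 0 * newtonKernel m y)
      (fun k => integrable_mul_sub_truncKernel hn hmn hm (by fun_prop) (hRpos k)) (fun k => ?_)
      (fun k => ?_) (ae_of_all _ fun y => ?_)
    · filter_upwards [newtonKernel_sub_truncKernel_nonneg hn hm (hRpos k)] with y hy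
      exact mul_nonneg (le_max_right _ _) hy
    · have i1 := integrable_mul_sub_truncKernel hn hmn hm (h := fun y => -lap u (x + y))
        (by fun_prop) (hRpos k)
      have i2 := integrable_mul_sub_truncKernel hn hmn hm (h := fun y => max (lap u (x + y)) 0)
        (by fun_prop) (hRpos k)
      have e1 : ∫ y, max (-lap u (x + y)) 0 * (newtonKernel m y - truncKernel m (Rk k) y) =
          (∫ y, -lap u (x + y) * (newtonKernel m y - truncKernel m (Rk k) y)) +
          ∫ y, max (lap u (x + y)) 0 * (newtonKernel m y - truncKernel m (Rk k) y) := by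
        rw [← integral_add i1 i2]
        congr 1
        ext y
        rw [← add_mul]
        congr 1
        rcases le_total (lap u (x + y)) 0 with h | h
        · rw [max_eq_right h, max_eq_left (by linarith), add_zero]
        · rw [max_eq_left h, max_eq_right (by linarith)]; ring
      have e2 : ∫ y, max (lap u (x + y)) 0 * (newtonKernel m y - truncKernel m (Rk k) y) ≤
          ∫ y, max (lap u (x + y)) 0 * newtonKernel m y :=
        integral_mono i2 hfn fun y => mul_le_mul_of_nonneg_left
          (sub_le_self _ (truncKernel_nonneg hm (hRpos k) y)) (le_max_right _ _)
      have e3 := le_integral_mul_bump (b := b) hn hmn hm huc x (hRpos k)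
      have e4 := hN (Rk k) (hRN k)
      rw [e1, ← bumpMass_mul_sub_eq hn hmn hm hu x (hRpos k)]
      linarith
    · simpa [truncKernel] using (((tendsto_truncPow_atTop hm (sq_nonneg ‖y‖)).comp hRlim).const_sub
        (newtonKernel m y)).const_mul (max (-lap u (x + y)) 0)
  refine (hfp.sub hfn).congr (ae_of_all _ fun y => ?_)
  simp only [Pi.sub_apply]
  rw [← sub_mul]
  congr 1
  rcases le_total (lap u (x + y)) 0 with h | h
  · rw [max_eq_right h, max_eq_left (by linarith), sub_zero]
  · rw [max_eq_left h, max_eq_right (by linarith), zero_sub]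

lemma tendsto_integral_mul_bump_atTop {u : 𝔼 → ℝ} (hn : 3 ≤ n)
    (hmn : (n : ℝ) = 2 * m + 2) (hm : 0 < m) (hu : ContDiff ℝ 2 u) (x : 𝔼)
    (hi : Integrable fun y => -lap u (x + y) * newtonKernel m y) :
    Tendsto (fun R => ∫ y, u (x + y) * bump m R y) atTop
      (𝓝 (bumpMass n * u x - ∫ y, -lap u (x + y) * newtonKernel m y)) := by
  have hh : Continuous fun y => -lap u (x + y) := ((continuous_lap hu).comp (by fun_prop)).neg
  refine ((tendsto_integral_mul_sub_truncKernel_atTop hn hm hh hi).const_sub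
    (bumpMass n * u x)).congr' ?_
  filter_upwards [eventually_gt_atTop 0] with R hR
  rw [← bumpMass_mul_sub_eq hn hmn hm hu x hR, sub_sub_cancel]

lemma abs_bump_sub_sub_bump_le (hm : 0 < m) {x : 𝔼} (hR : 0 < R) (hxR : ‖x‖ ≤ √R) (y : 𝔼) :
    |bump m R (y - x) - bump m R y| ≤
      10 * 8 ^ (m + 1) * ‖x‖ / √R * bump m (8 * R) y := by
  have hρ : 0 < √R := Real.sqrt_pos.2 hR
  have hρR : √R ^ 2 = R := Real.sq_sqrt hR.le
  set ρ := √R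
  have hR8 : 0 < 8 * R := by positivity
  have tri : ‖y‖ - ‖x‖ ≤ ‖y - x‖ := norm_sub_norm_le y x
  rcases le_or_gt ‖y‖ (2 * ρ) with hy | hy
  · set P := 4 * m * (m + 1) * (m + 2) * R ^ (-m - 1) with hP
    have hP0 : 0 < P := by positivity
    have h1 : |bump m R (y - x) - bump m R y| ≤ P * (5 * ‖x‖ / ρ) := by
      have e : bump m R (y - x) - bump m R y =
          P * (max (1 - ‖y - x‖ ^ 2 / R) 0 - max (1 - ‖y‖ ^ 2 / R) 0) := by
        simp only [bump, bumpProfile, hP]; ring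
      rw [e, abs_mul, abs_of_pos hP0]
      refine mul_le_mul_of_nonneg_left ((abs_max_sub_max_le_abs _ _ _).trans ?_) hP0.le
      have e2 : (1 - ‖y - x‖ ^ 2 / R) - (1 - ‖y‖ ^ 2 / R) =
          (‖y‖ - ‖y - x‖) * (‖y‖ + ‖y - x‖) / R := by ring
      have a1 : |‖y‖ - ‖y - x‖| ≤ ‖x‖ := by
        simpa using abs_norm_sub_norm_le y (y - x)
      have a2 : ‖y‖ + ‖y - x‖ ≤ 5 * ρ := by
        linarith [norm_sub_le y x]
      rw [e2, abs_div, abs_mul, abs_of_pos hR, abs_of_nonneg (a := ‖y‖ + ‖y - x‖) (by positivity)]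
      calc |‖y‖ - ‖y - x‖| * (‖y‖ + ‖y - x‖) / R ≤ ‖x‖ * (5 * ρ) / R := by gcongr
        _ = 5 * ‖x‖ / ρ := by rw [← hρR]; field_simp
    have h2 : P * ((8 : ℝ) ^ (m + 1))⁻¹ / 2 ≤ bump m (8 * R) y := by
      have a3 : ‖y‖ ^ 2 / (8 * R) ≤ 1 / 2 := by
        rw [div_le_iff₀ hR8, ← hρR]
        nlinarith [norm_nonneg y]
      have a4 : (1 : ℝ) / 2 ≤ max (1 - ‖y‖ ^ 2 / (8 * R)) 0 := le_max_of_le_left (by linarith)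
      have a5 : (8 * R) ^ (-m - 1) = ((8 : ℝ) ^ (m + 1))⁻¹ * R ^ (-m - 1) := by
        rw [mul_rpow (by norm_num) hR.le, ← rpow_neg (by norm_num), neg_add']
      calc _ = 4 * m * (m + 1) * (m + 2) * (8 * R) ^ (-m - 1) * (1 / 2) := by
            rw [a5, hP]; ring
        _ ≤ _ := mul_le_mul_of_nonneg_left a4 (by positivity)
    refine h1.trans (le_trans (le_of_eq ?_)
      (mul_le_mul_of_nonneg_left h2 (by positivity)))
    have : (8 : ℝ) ^ (m + 1) ≠ 0 := by positivity
    field_simp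
    ring
  · rw [bump_of_le hR (y := y - x), bump_of_le hR (y := y), sub_zero, abs_zero]
    · exact mul_nonneg (by positivity) (bump_nonneg hm hR8 y)
    · rw [← hρR]; gcongr; linarith
    · rw [← hρR]; gcongr; linarith

lemma integral_mul_bump_sub_eq {u : 𝔼 → ℝ} (hu : Continuous u) (b : ℝ) (x : 𝔼) (hR : 0 < R) :
    (∫ y, u (x + y) * bump m R y) - ∫ y, u (0 + y) * bump m R y =
      ∫ y, (u y - b) * (bump m R (y - x) - bump m R y) := by
  have hi : ∀ {v : 𝔼 → ℝ}, Continuous v → Integrable fun y => v y * bump m R (y - x) := by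
    intro v hv
    have := (integrable_mul_bump (m := m) (v := fun y => v (x + y)) (by fun_prop)
      hR).comp_sub_right x
    simpa using this
  have hs : ∀ v : 𝔼 → ℝ, ∫ y, v y * bump m R (y - x) = ∫ y, v (x + y) * bump m R y := by
    intro v
    rw [← integral_add_left_eq_self _ x]
    simp
  have hub : Continuous fun y => u y - b := by fun_prop
  have e : ∫ y, (u y - b) * (bump m R (y - x) - bump m R y) =
      (∫ y, (u y - b) * bump m R (y - x)) - ∫ y, (u y - b) * bump m R y := by
    rw [← integral_sub (hi hub) (integrable_mul_bump hub hR)]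
    simp only [mul_sub]
  have e1 : ∀ z : 𝔼, ∫ y, (u (z + y) - b) * bump m R y =
      (∫ y, u (z + y) * bump m R y) - ∫ y : 𝔼, b * bump m R y := by
    intro z
    rw [← integral_sub (integrable_mul_bump (by fun_prop) hR)
      (integrable_mul_bump continuous_const hR)]
    simp only [sub_mul]
  have e2 := e1 0
  simp only [zero_add] at e2 ⊢
  rw [e, hs (fun y => u y - b), e1, e2]
  ring

lemma tendsto_integral_mul_bump_sub {u : 𝔼 → ℝ} {L : Set 𝔼} {l : ℝ} (hn : 3 ≤ n)
    (hmn : (n : ℝ) = 2 * m + 2) (hm : 0 < m) (hu : Continuous u) (hL : IsCompact L)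
    (hb : ∀ y ∉ L, b ≤ u y)
    (hl : Tendsto (fun R => ∫ y, u (0 + y) * bump m R y) atTop (𝓝 l)) (x : 𝔼) :
    Tendsto (fun R => (∫ y, u (x + y) * bump m R y) - ∫ y, u (0 + y) * bump m R y) atTop
      (𝓝 0) := by
  have hneg := tendsto_integral_compactSupport_mul_bump hm (w := fun y => max (b - u y) 0)
    (by fun_prop) (hasCompactSupport_max_zero hL fun y hy => by linarith [hb y hy]) 0
  have h8 : Tendsto (fun R : ℝ => 8 * R) atTop atTop :=
    tendsto_id.const_mul_atTop (by norm_num)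
  have hpref : Tendsto (fun R => 10 * 8 ^ (m + 1) * ‖x‖ / √R) atTop (𝓝 0) :=
    tendsto_const_nhds.div_atTop tendsto_sqrt_atTop
  have hlim := hpref.mul (((hl.sub_const (bumpMass n * b)).add (hneg.const_mul 2)).comp h8)
  rw [zero_mul] at hlim
  refine squeeze_zero_norm' ?_ hlim
  filter_upwards [eventually_ge_atTop (‖x‖ ^ 2), eventually_gt_atTop 0] with R hxR hR
  have hR8 : 0 < 8 * R := by positivity
  rw [integral_mul_bump_sub_eq hu b x hR]
  have i1 := integrable_mul_bump (m := m) (v := fun y => u y) (by fun_prop) hR8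
  have i2 := integrable_mul_bump (m := m) (v := fun _ : 𝔼 => b) (by fun_prop) hR8
  have i3 := integrable_mul_bump (m := m) (v := fun y => max (b - u y) 0) (by fun_prop) hR8
  have e : (∫ y, u y * bump m (8 * R) y) - bumpMass n * b +
      2 * ∫ y, max (b - u y) 0 * bump m (8 * R) y =
      ∫ y, |u y - b| * bump m (8 * R) y := by
    rw [← integral_bump hn hmn hR8, mul_comm _ b, ← integral_const_mul, ← integral_const_mul,
      ← integral_sub i1 i2, ← integral_add (f := fun y => _ - _) (i1.sub i2) (i3.const_mul 2)]
    congr 1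
    ext y
    rcases le_total (u y) b with h | h
    · rw [max_eq_left (by linarith), abs_of_nonpos (by linarith)]; ring
    · rw [max_eq_right (by linarith), abs_of_nonneg (by linarith)]; ring
  simp only [Function.comp_apply, zero_add]
  rw [e, ← integral_const_mul]
  refine norm_integral_le_of_norm_le
    ((integrable_mul_bump (by fun_prop) hR8).const_mul _) (ae_of_all _ fun y => ?_)
  rw [norm_mul, Real.norm_eq_abs, Real.norm_eq_abs, mul_left_comm]
  exact mul_le_mul_of_nonneg_left
    (abs_bump_sub_sub_bump_le hm hR (Real.le_sqrt_of_sq_le hxR) y) (abs_nonneg _)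

end Representation

theorem stmt_3 {n : ℕ} (hn : 3 ≤ n) (α : ℝ) (hα0 : 0 < α) (hα1 : α < 1)
    (f u : EuclideanSpace ℝ (Fin n) → ℝ)
    (hf_holder : ∀ x : EuclideanSpace ℝ (Fin n), ∃ (r : ℝ) (Cf : NNReal), 0 < r ∧
      HolderOnWith Cf (Real.toNNReal α) f (Metric.ball x r))
    (hf_nonneg : ∃ K : Set (EuclideanSpace ℝ (Fin n)), IsCompact K ∧ ∀ x ∉ K, 0 ≤ f x)
    (hu : ContDiff ℝ 2 u)
    (hPDE : ∀ x, - lap u x = f x)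
    (hliminf : ∃ b : ℝ, ∀ᶠ x in Filter.cocompact (EuclideanSpace ℝ (Fin n)), b ≤ u x) :
    ∃ a : ℝ, min 0 (Filter.liminf u (Filter.cocompact (EuclideanSpace ℝ (Fin n)))) ≤ a ∧
      ∀ x, u x =
        (1 / ((n : ℝ) * ((n : ℝ) - 2) *
          (volume (Metric.ball (0 : EuclideanSpace ℝ (Fin n)) 1)).toReal)) *
        (∫ t : EuclideanSpace ℝ (Fin n), f t / ‖x - t‖ ^ ((n : ℝ) - 2)) + a := by
  obtain ⟨K, hK, hfK⟩ := hf_nonneg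
  have hn3 : (3 : ℝ) ≤ n := by exact_mod_cast hn
  obtain ⟨m, hmn⟩ : ∃ m : ℝ, (n : ℝ) = 2 * m + 2 := ⟨((n : ℝ) - 2) / 2, by ring⟩
  have hm : 0 < m := by rw [hmn] at hn3; linarith
  have hA := bumpMass_pos hn
  have hfK' : ∀ y ∉ K, 0 ≤ -lap u y := fun y hy => (hPDE y).symm ▸ hfK y hy
  have hco : ∀ b : ℝ, (∀ᶠ x in cocompact (EuclideanSpace ℝ (Fin n)), b ≤ u x) →
      ∃ L : Set (EuclideanSpace ℝ (Fin n)), IsCompact L ∧ ∀ y ∉ L, b ≤ u y := fun b hb => by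
    obtain ⟨L, hL, hLb⟩ := mem_cocompact.1 hb
    exact ⟨L, hL, fun y hy => hLb hy⟩
  obtain ⟨b, hb⟩ := hliminf
  obtain ⟨L, hL, hbL⟩ := hco b hb
  have hi := integrable_lap_mul_newtonKernel hn hmn hm hu hK hfK' hL hbL
  have hlim := fun x => tendsto_integral_mul_bump_atTop hn hmn hm hu x (hi x)
  set l := bumpMass n * u 0 - ∫ y, -lap u (0 + y) * newtonKernel m y with hl
  refine ⟨l / bumpMass n, min_le_of_right_le (csSup_le ⟨b, hb⟩ fun c hc => ?_), fun x => ?_⟩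
  · obtain ⟨L', hL', hcL⟩ := hco c hc
    have hneg := tendsto_integral_compactSupport_mul_bump hm (w := fun y => max (c - u y) 0)
      ((continuous_const.sub hu.continuous).max continuous_const)
      (hasCompactSupport_max_zero hL' fun y hy => by linarith [hcL y hy]) 0
    have h1 := hneg.const_sub (bumpMass n * c)
    rw [sub_zero] at h1
    rw [le_div_iff₀ hA, mul_comm]
    refine le_of_tendsto_of_tendsto h1 (hlim 0) ?_
    filter_upwards [Filter.eventually_gt_atTop 0] with R hR
      using le_integral_mul_bump hn hmn hm hu.continuous 0 hR
  · have hx : bumpMass n * u x - ∫ y, -lap u (x + y) * newtonKernel m y = l :=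
      sub_eq_zero.1 <| tendsto_nhds_unique ((hlim x).sub (hlim 0))
        (tendsto_integral_mul_bump_sub hn hmn hm hu.continuous hL hbL (hlim 0) x)
    have hint : ∫ t, f t / ‖x - t‖ ^ ((n : ℝ) - 2) =
        ∫ y, -lap u (x + y) * newtonKernel m y := by
      rw [← integral_add_left_eq_self _ x]
      congr 1
      ext y
      rw [hPDE, div_eq_mul_inv, newtonKernel, sub_add_cancel_left, norm_neg, ← rpow_natCast ‖y‖ 2,
        ← rpow_mul (norm_nonneg y), ← rpow_neg (norm_nonneg y)]
      congr 2
      rw [hmn]; push_cast; ring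
    rw [hint, ← hx]
    change u x = 1 / bumpMass n * _ + _
    field_simp
    ring
end

section
/- Let $n \ge 3$, $1 \le k < \frac{n-2}{2}$ and let $K : \mathbb{R}^n \to \mathbb{R}$ be bounded above, nonnegative, and not identically zero. Write $(y,z) \in \mathbb{R}^k \times \mathbb{R}^{n-k}$. Let $u$ be a positive $C^2$ solution of $-\Delta u = K u^{\frac{n+2}{n-2}}$ in $\mathbb{R}^n$ equal to its Newtonian potential, i.e. $u(x) = \frac{1}{n(n-2)\omega_n}\int_{\mathbb{R}^n}\frac{K(\tilde x) u(\tilde x)^{\frac{n+2}{n-2}}}{|x-\tilde x|^{n-2}} d\tilde x$. If there exists $\tau > 0$ such that $\sup_{(y,z)} (1+|z|)^{\frac{n-2}{2}+\tau} u(y,z) < \infty$, then $\sup_{(y,z)} (1+|z|)^{n-2-k} u(y,z) < \infty$. -/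
open Real MeasureTheory

/-- The norm of the "z-part" of a point of `ℝ^n`, i.e. of its last `n - k` coordinates. -/
noncomputable def zNorm {n : ℕ} (k : ℕ) (x : EuclideanSpace ℝ (Fin n)) : ℝ :=
  Real.sqrt (∑ i ∈ Finset.univ.filter (fun i : Fin n => k ≤ (i : ℕ)), (x i) ^ 2)

open Module
open scoped ENNReal

lemma ENNReal.rpow_neg_le_rpow_neg {x y : ℝ≥0∞} {a : ℝ} (ha : 0 ≤ a) (h : x ≤ y) :
    y ^ (-a) ≤ x ^ (-a) := by
  rw [ENNReal.rpow_neg, ENNReal.rpow_neg]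
  gcongr

/-- Comparison of negative powers of quantities that are comparable up to a constant factor. -/
lemma ENNReal.rpow_neg_le_mul_rpow_neg {x y c : ℝ≥0∞} {a : ℝ} (ha : 0 ≤ a) (hc : c ≠ 0)
    (hc' : c ≠ ⊤) (h : y ≤ c * x) : x ^ (-a) ≤ c ^ a * y ^ (-a) := by
  have h1 : c⁻¹ * y ≤ x := by
    rw [mul_comm, ← div_eq_mul_inv]
    exact ENNReal.div_le_of_le_mul' h
  refine (ENNReal.rpow_neg_le_rpow_neg ha h1).trans_eq ?_
  rcases eq_or_ne y 0 with rfl | hy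
  · rcases ha.eq_or_lt with rfl | ha
    · simp
    · rw [mul_zero, ENNReal.zero_rpow_of_neg (by linarith), ENNReal.mul_top]
      simp [ENNReal.rpow_eq_zero_iff, hc, hc']
  · rw [ENNReal.mul_rpow_of_ne_zero (by simpa using hc') hy, ENNReal.inv_rpow, ENNReal.rpow_neg,
      inv_inv]

/-- Splitting of the Riesz potential integrand according to whether `w` is close to `z`. -/
lemma one_add_enorm_rpow_neg_mul_enorm_sub_rpow_neg_le
    {V : Type*} [NormedAddCommGroup V] {q β : ℝ} (hq : 0 ≤ q) (hβ : 0 ≤ β)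
    (z w : V) :
    (1 + ‖w‖ₑ) ^ (-q) * ‖z - w‖ₑ ^ (-β) ≤
      2 ^ (q + 3) * (1 + ‖z‖ₑ) ^ (3 - q) *
        (‖z - w‖ₑ ^ (-β) * (1 + ‖z‖ₑ + ‖z - w‖ₑ) ^ (-3 : ℝ)) +
      5 ^ β * ((1 + ‖w‖ₑ) ^ (-q) * (1 + ‖z‖ₑ + ‖w‖ₑ) ^ (-β)) := by
  have hR0 : 1 + ‖z‖ₑ ≠ 0 := by simp
  have hRt : 1 + ‖z‖ₑ ≠ ⊤ := by finiteness
  have e1 : 1 + ‖z‖ₑ = ENNReal.ofReal (1 + ‖z‖) := by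
    rw [ENNReal.ofReal_add zero_le_one (norm_nonneg _), ENNReal.ofReal_one, ofReal_norm]
  have htri := norm_sub_norm_le z w
  have htri' := norm_sub_norm_le w z
  rw [norm_sub_rev] at htri'
  have hz := norm_nonneg z
  have hw := norm_nonneg w
  have hv := norm_nonneg (z - w)
  rcases le_total (2 * ‖z - w‖) (1 + ‖z‖) with h | h
  · refine le_add_right ?_
    have h1 : (1 + ‖w‖ₑ) ^ (-q) ≤ 2 ^ q * (1 + ‖z‖ₑ) ^ (-q) := by
      refine ENNReal.rpow_neg_le_mul_rpow_neg hq (by simp) (by simp) ?_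
      simp only [← ofReal_norm]
      rw [← ENNReal.ofReal_one, ← ENNReal.ofReal_ofNat, ← ENNReal.ofReal_add, ← ENNReal.ofReal_add,
        ← ENNReal.ofReal_mul]
      · apply ENNReal.ofReal_le_ofReal
        linarith
      all_goals positivity
    have h2 : 1 ≤ 2 ^ (3 : ℝ) * (1 + ‖z‖ₑ) ^ (3 : ℝ) * (1 + ‖z‖ₑ + ‖z - w‖ₑ) ^ (-3 : ℝ) := by
      rw [← ENNReal.mul_rpow_of_nonneg _ _ (by norm_num), ENNReal.rpow_neg, ← div_eq_mul_inv,
        ENNReal.le_div_iff_mul_le (by simp) (by left; finiteness), one_mul]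
      gcongr
      rw [two_mul]
      gcongr
      rw [e1, ← ofReal_norm]
      apply ENNReal.ofReal_le_ofReal
      linarith
    calc (1 + ‖w‖ₑ) ^ (-q) * ‖z - w‖ₑ ^ (-β)
        ≤ (2 ^ q * (1 + ‖z‖ₑ) ^ (-q)) * ‖z - w‖ₑ ^ (-β) *
          (2 ^ (3 : ℝ) * (1 + ‖z‖ₑ) ^ (3 : ℝ) * (1 + ‖z‖ₑ + ‖z - w‖ₑ) ^ (-3 : ℝ)) := by
          rw [← mul_one ((1 + ‖w‖ₑ) ^ (-q) * ‖z - w‖ₑ ^ (-β))]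
          gcongr
      _ = _ := by
          rw [ENNReal.rpow_add q 3 (by simp) (by simp), sub_eq_add_neg 3,
            ENNReal.rpow_add _ _ hR0 hRt]
          ring
  · refine le_add_left ?_
    rw [mul_left_comm]
    gcongr
    refine ENNReal.rpow_neg_le_mul_rpow_neg hβ (by simp) (by simp) ?_
    rw [e1]
    simp only [← ofReal_norm]
    rw [← ENNReal.ofReal_ofNat, ← ENNReal.ofReal_add (by positivity) (by positivity),
      ← ENNReal.ofReal_mul (by positivity)]
    apply ENNReal.ofReal_le_ofReal
    linarith

section Haar

variable {E : Type*} [NormedAddCommGroup E] [NormedSpace ℝ E] [FiniteDimensional ℝ E]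
  [MeasurableSpace E] [BorelSpace E] (μ : Measure E) [μ.IsAddHaarMeasure]

lemma lintegral_eq_mul_lintegral_comp_smul (f : E → ℝ≥0∞) {r : ℝ} (hr : 0 < r) :
    ∫⁻ x, f x ∂μ = ‖r‖ₑ ^ (finrank ℝ E : ℝ) * ∫⁻ x, f (r • x) ∂μ := by
  have h := (measurableEmbedding_const_smul₀ (α := E) hr.ne').lintegral_map (μ := μ) f
  rw [Measure.map_addHaar_smul μ hr.ne', lintegral_smul_measure] at h
  rw [← h, smul_eq_mul, ← mul_assoc]
  have : ‖r‖ₑ ^ (finrank ℝ E : ℝ) * ENNReal.ofReal |(r ^ finrank ℝ E)⁻¹| = 1 := by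
    rw [Real.enorm_eq_ofReal hr.le, ENNReal.rpow_natCast, ← ENNReal.ofReal_pow hr.le,
      ← ENNReal.ofReal_mul (by positivity), abs_of_pos (by positivity),
      mul_inv_cancel₀ (by positivity), ENNReal.ofReal_one]
  rw [this, one_mul]

lemma lintegral_one_add_enorm_rpow_neg_lt_top {a : ℝ} (ha : (finrank ℝ E : ℝ) < a) :
    ∫⁻ x : E, (1 + ‖x‖ₑ) ^ (-a) ∂μ < ⊤ := by
  convert finite_integral_one_add_norm (μ := μ) ha using 3 with x
  rw [← ENNReal.ofReal_rpow_of_pos (by positivity), ENNReal.ofReal_add zero_le_one (norm_nonneg _),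
    ENNReal.ofReal_one, ofReal_norm]

lemma setLIntegral_ball_enorm_rpow_neg_lt_top [Nontrivial E] {b : ℝ}
    (hb : b < finrank ℝ E) :
    ∫⁻ x in Metric.ball (0 : E) 1, ‖x‖ₑ ^ (-b) ∂μ < ⊤ := by
  have h : IntegrableOn (fun x : E => ‖x‖ ^ (-b)) (Metric.ball (0 : E) 1) μ := by
    refine (integrableOn_fun_norm_addHaar μ (f := fun y : ℝ => y ^ (-b))).2 ?_
    have h1 : IntegrableOn (fun y : ℝ => y ^ ((finrank ℝ E : ℝ) - 1 - b)) (Set.Ioo 0 1) := by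
      rw [intervalIntegral.integrableOn_Ioo_rpow_iff one_pos]
      linarith
    refine h1.congr_fun (fun y hy => ?_) measurableSet_Ioo
    have hd : 1 ≤ finrank ℝ E := finrank_pos
    simp only [smul_eq_mul]
    rw [← Real.rpow_natCast, ← Real.rpow_add hy.1]
    push_cast [hd]
    ring_nf
  refine lt_of_le_of_lt (lintegral_mono_ae ?_) h.2
  refine ae_restrict_of_ae ?_
  filter_upwards [measure_singleton (μ := μ) (0 : E) |> compl_mem_ae_iff.2] with x hx
  have hx : 0 < ‖x‖ := by simpa using hx
  rw [Real.enorm_eq_ofReal (by positivity), ← ENNReal.ofReal_rpow_of_pos hx, ofReal_norm]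

lemma lintegral_enorm_rpow_neg_mul_lt_top [Nontrivial E] {b c : ℝ} (hb : 0 ≤ b)
    (hb' : b < finrank ℝ E) (hc : 0 ≤ c) (hbc : finrank ℝ E < b + c) :
    ∫⁻ x : E, ‖x‖ₑ ^ (-b) * (1 + ‖x‖ₑ) ^ (-c) ∂μ < ⊤ := by
  rw [← lintegral_add_compl _ (measurableSet_ball (x := (0 : E)) (ε := 1))]
  refine ENNReal.add_lt_top.2 ⟨?_, ?_⟩
  · refine lt_of_le_of_lt (lintegral_mono fun x => ?_)
      (setLIntegral_ball_enorm_rpow_neg_lt_top μ hb')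
    calc ‖x‖ₑ ^ (-b) * (1 + ‖x‖ₑ) ^ (-c) ≤ ‖x‖ₑ ^ (-b) * 1 ^ (-c) := by
          exact mul_le_mul_right (ENNReal.rpow_neg_le_rpow_neg hc le_self_add) _
      _ = ‖x‖ₑ ^ (-b) := by simp
  · have h := lintegral_one_add_enorm_rpow_neg_lt_top μ hbc
    refine lt_of_le_of_lt ?_ (ENNReal.mul_lt_top (a := 2 ^ b) (by finiteness) h)
    rw [← lintegral_const_mul _ (by fun_prop)]
    refine (setLIntegral_mono' measurableSet_ball.compl fun x hx => ?_).trans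
      (setLIntegral_le_lintegral _ _)
    have hx : 1 ≤ ‖x‖ₑ := by
      rw [← ofReal_norm, ← ENNReal.ofReal_one]
      exact ENNReal.ofReal_le_ofReal (by simpa using hx)
    have h2 : ‖x‖ₑ ^ (-b) ≤ 2 ^ b * (1 + ‖x‖ₑ) ^ (-b) := by
      refine ENNReal.rpow_neg_le_mul_rpow_neg hb (by simp) (by simp) ?_
      rw [two_mul]
      gcongr
    rw [neg_add, ENNReal.rpow_add _ _ (by simp) (by finiteness), ← mul_assoc]
    gcongr

/-- Homogeneity of the integral of `‖x‖⁻ᵇ (r + ‖x‖)⁻ᶜ` in `r`. -/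
lemma lintegral_enorm_rpow_neg_mul_add_rpow_neg {r : ℝ} (hr : 0 < r) (b c : ℝ) :
    ∫⁻ x : E, ‖x‖ₑ ^ (-b) * (‖r‖ₑ + ‖x‖ₑ) ^ (-c) ∂μ =
      ‖r‖ₑ ^ ((finrank ℝ E : ℝ) - b - c) *
        ∫⁻ x : E, ‖x‖ₑ ^ (-b) * (1 + ‖x‖ₑ) ^ (-c) ∂μ := by
  have hr0 : ‖r‖ₑ ≠ 0 := by simpa using hr.ne'
  have hrt : ‖r‖ₑ ≠ ⊤ := enorm_ne_top
  rw [lintegral_eq_mul_lintegral_comp_smul μ _ hr]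
  have h (x : E) : ‖r • x‖ₑ ^ (-b) * (‖r‖ₑ + ‖r • x‖ₑ) ^ (-c) =
      ‖r‖ₑ ^ (-b - c) * (‖x‖ₑ ^ (-b) * (1 + ‖x‖ₑ) ^ (-c)) := by
    rw [enorm_smul, ← mul_one_add, ENNReal.mul_rpow_of_ne_top hrt enorm_ne_top,
      ENNReal.mul_rpow_of_ne_top hrt (by finiteness), sub_eq_add_neg,
      ENNReal.rpow_add _ _ hr0 hrt]
    ring
  simp_rw [h]
  rw [lintegral_const_mul _ (by fun_prop), ← mul_assoc, ← ENNReal.rpow_add _ _ hr0 hrt]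
  ring_nf

lemma exists_lintegral_enorm_sub_add_rpow_neg_le {a : ℝ} (ha : finrank ℝ E < a) :
    ∃ C : ℝ≥0∞, C ≠ ⊤ ∧ ∀ (y : E) (s : ℝ≥0∞), s ≠ ⊤ →
      ∫⁻ t, (‖y - t‖ₑ + s) ^ (-a) ∂μ ≤ C * s ^ (-(a - finrank ℝ E)) := by
  refine ⟨∫⁻ x : E, (1 + ‖x‖ₑ) ^ (-a) ∂μ + 1,
    by have := lintegral_one_add_enorm_rpow_neg_lt_top μ ha; finiteness, fun y s hs => ?_⟩
  rcases eq_or_ne s 0 with rfl | hs0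
  · rw [ENNReal.zero_rpow_of_neg (by linarith), ENNReal.mul_top (by simp)]
    exact le_top
  lift s to NNReal using hs
  have hs' : 0 < (s : ℝ) := by
    have : s ≠ 0 := by simpa using hs0
    positivity
  have h := lintegral_enorm_rpow_neg_mul_add_rpow_neg μ hs' 0 a
  simp only [neg_zero, ENNReal.rpow_zero, one_mul, NNReal.enorm_eq, sub_zero] at h
  rw [lintegral_sub_left_eq_self (fun t => (‖t‖ₑ + s) ^ (-a)) y]
  simp_rw [add_comm _ (s : ℝ≥0∞)]
  rw [h, mul_comm, neg_sub]
  gcongr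
  exact le_self_add

/-- Decay of the Riesz potential of order two of `(1 + ‖w‖)⁻q`. -/
lemma exists_lintegral_riesz_le [Nontrivial E] {q γ : ℝ} (hd : 2 < finrank ℝ E)
    (hq : 2 < q) (hγ : (q < finrank ℝ E ∧ γ = q - 2) ∨ (finrank ℝ E < q ∧ γ = finrank ℝ E - 2)) :
    ∃ C : ℝ≥0∞, C ≠ ⊤ ∧ ∀ z : E,
      ∫⁻ w, (1 + ‖w‖ₑ) ^ (-q) * ‖z - w‖ₑ ^ (-((finrank ℝ E : ℝ) - 2)) ∂μ ≤
        C * (1 + ‖z‖ₑ) ^ (-γ) := by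
  have hd' : (2 : ℝ) < finrank ℝ E := mod_cast hd
  set d : ℝ := (finrank ℝ E : ℝ) with hd_def
  have hβ : 0 ≤ d - 2 := by linarith
  set A : ℝ≥0∞ := ∫⁻ x : E, ‖x‖ₑ ^ (-(d - 2)) * (1 + ‖x‖ₑ) ^ (-3 : ℝ) ∂μ with hA
  have hAt : A ≠ ⊤ :=
    (lintegral_enorm_rpow_neg_mul_lt_top μ hβ (by linarith) (by norm_num) (by linarith)).ne
  have key (z : E) : ∫⁻ w, ‖z - w‖ₑ ^ (-(d - 2)) * (1 + ‖z‖ₑ + ‖z - w‖ₑ) ^ (-3 : ℝ) ∂μ =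
      (1 + ‖z‖ₑ) ^ (-1 : ℝ) * A := by
    have h := lintegral_enorm_rpow_neg_mul_add_rpow_neg μ (r := 1 + ‖z‖) (by positivity) (d - 2) 3
    rw [lintegral_sub_left_eq_self
      (fun w => ‖w‖ₑ ^ (-(d - 2)) * (1 + ‖z‖ₑ + ‖w‖ₑ) ^ (-3 : ℝ)) z]
    rw [Real.enorm_eq_ofReal (by positivity), ENNReal.ofReal_add zero_le_one (norm_nonneg _),
      ENNReal.ofReal_one, ofReal_norm] at h
    rw [h, hA]
    congr 2
    rw [← hd_def]; ring
  obtain ⟨B, hBt, hB⟩ : ∃ B : ℝ≥0∞, B ≠ ⊤ ∧ ∀ z : E,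
      ∫⁻ w, (1 + ‖w‖ₑ) ^ (-q) * (1 + ‖z‖ₑ + ‖w‖ₑ) ^ (-(d - 2)) ∂μ ≤ B * (1 + ‖z‖ₑ) ^ (-γ) := by
    rcases hγ with ⟨hqd, rfl⟩ | ⟨hqd, rfl⟩
    · refine ⟨_, (lintegral_enorm_rpow_neg_mul_lt_top μ (b := q) (c := d - 2) (by linarith) hqd hβ
        (by linarith)).ne, fun z => ?_⟩
      have h := lintegral_enorm_rpow_neg_mul_add_rpow_neg μ (r := 1 + ‖z‖) (by positivity) q (d - 2)
      rw [Real.enorm_eq_ofReal (by positivity), ENNReal.ofReal_add zero_le_one (norm_nonneg _),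
        ENNReal.ofReal_one, ofReal_norm] at h
      rw [mul_comm, show -(q - 2) = d - q - (d - 2) by ring, ← h]
      exact lintegral_mono fun w =>
        mul_le_mul_left (ENNReal.rpow_neg_le_rpow_neg (by linarith) le_add_self) _
    · refine ⟨_, (lintegral_one_add_enorm_rpow_neg_lt_top μ hqd).ne, fun z => ?_⟩
      rw [← lintegral_mul_const _ (by fun_prop)]
      exact lintegral_mono fun w =>
        mul_le_mul_right (ENNReal.rpow_neg_le_rpow_neg hβ le_self_add) _
  have hγq : γ ≤ q - 2 := by rcases hγ with h | h <;> linarith [h.2]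
  refine ⟨2 ^ (q + 3) * A + 5 ^ (d - 2) * B, by finiteness, fun z => ?_⟩
  have hR0 : 1 + ‖z‖ₑ ≠ 0 := by simp
  have hRt : 1 + ‖z‖ₑ ≠ ⊤ := by finiteness
  calc _ ≤ _ := lintegral_mono fun w =>
        one_add_enorm_rpow_neg_mul_enorm_sub_rpow_neg_le (by linarith) hβ z w
    _ = 2 ^ (q + 3) * (1 + ‖z‖ₑ) ^ (3 - q) * ((1 + ‖z‖ₑ) ^ (-1 : ℝ) * A) + 5 ^ (d - 2) *
        ∫⁻ w, (1 + ‖w‖ₑ) ^ (-q) * (1 + ‖z‖ₑ + ‖w‖ₑ) ^ (-(d - 2)) ∂μ := by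
        rw [lintegral_add_left (by fun_prop), lintegral_const_mul _ (by fun_prop),
          lintegral_const_mul _ (by fun_prop), key]
    _ = 2 ^ (q + 3) * A * (1 + ‖z‖ₑ) ^ (2 - q) + 5 ^ (d - 2) *
        ∫⁻ w, (1 + ‖w‖ₑ) ^ (-q) * (1 + ‖z‖ₑ + ‖w‖ₑ) ^ (-(d - 2)) ∂μ := by
        rw [show 2 - q = (3 - q) + (-1) by ring, ENNReal.rpow_add _ _ hR0 hRt]
        ring
    _ ≤ 2 ^ (q + 3) * A * (1 + ‖z‖ₑ) ^ (-γ) + 5 ^ (d - 2) * (B * (1 + ‖z‖ₑ) ^ (-γ)) := by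
        gcongr
        · exact le_self_add
        · linarith
        · exact hB z
    _ = _ := by ring

end Haar

lemma exists_lintegral_prod_le {F E : Type*}
    [NormedAddCommGroup F] [NormedSpace ℝ F] [FiniteDimensional ℝ F] [Nontrivial F]
    [MeasurableSpace F] [BorelSpace F] (ν : Measure F) [ν.IsAddHaarMeasure]
    [NormedAddCommGroup E] [NormedSpace ℝ E] [FiniteDimensional ℝ E]
    [MeasurableSpace E] [BorelSpace E] (μ : Measure E) [μ.IsAddHaarMeasure]
    {a q γ : ℝ} (ha : a = finrank ℝ F + finrank ℝ E - 2) (hd : 2 < finrank ℝ F) (hq : 2 < q)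
    (hγ : (q < finrank ℝ F ∧ γ = q - 2) ∨ (finrank ℝ F < q ∧ γ = finrank ℝ F - 2)) :
    ∃ C : ℝ≥0∞, C ≠ ⊤ ∧ ∀ (z : F) (y : E),
      ∫⁻ p : F × E, (1 + ‖p.1‖ₑ) ^ (-q) * (‖y - p.2‖ₑ + ‖z - p.1‖ₑ) ^ (-a) ∂(ν.prod μ) ≤
        C * (1 + ‖z‖ₑ) ^ (-γ) := by
  have hd' : (2 : ℝ) < finrank ℝ F := mod_cast hd
  obtain ⟨A, hA, hA'⟩ := exists_lintegral_enorm_sub_add_rpow_neg_le μ (a := a) (by linarith)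
  obtain ⟨B, hB, hB'⟩ := exists_lintegral_riesz_le ν hd hq hγ
  refine ⟨A * B, by finiteness, fun z y => ?_⟩
  rw [lintegral_prod _ (by fun_prop)]
  calc _ ≤ ∫⁻ w, A * ((1 + ‖w‖ₑ) ^ (-q) * ‖z - w‖ₑ ^ (-((finrank ℝ F : ℝ) - 2))) ∂ν := by
        refine lintegral_mono fun w => ?_
        simp only
        rw [lintegral_const_mul _ (by fun_prop), mul_left_comm]
        gcongr
        rw [show (finrank ℝ F : ℝ) - 2 = a - finrank ℝ E by rw [ha]; ring]
        exact hA' y ‖z - w‖ₑ enorm_ne_top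
    _ ≤ A * B * (1 + ‖z‖ₑ) ^ (-γ) := by
        rw [lintegral_const_mul _ (by fun_prop), mul_assoc]
        gcongr
        exact hB' z

/-- The last `n - k` coordinates of a point, with the sup norm. -/
def zPart {n : ℕ} (k : ℕ) (x : EuclideanSpace ℝ (Fin n)) : {i : Fin n // k ≤ (i : ℕ)} → ℝ :=
  fun i => x i

/-- The first `k` coordinates of a point, with the sup norm. -/
def yPart {n : ℕ} (k : ℕ) (x : EuclideanSpace ℝ (Fin n)) : {i : Fin n // ¬ k ≤ (i : ℕ)} → ℝ :=
  fun i => x i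

lemma measurePreserving_zPart_yPart (n k : ℕ) :
    MeasurePreserving
      (fun x : EuclideanSpace ℝ (Fin n) => (zPart k x, yPart k x)) volume
      ((volume : Measure ({i : Fin n // k ≤ (i : ℕ)} → ℝ)).prod volume) :=
  (volume_preserving_piEquivPiSubtypeProd (fun _ : Fin n => ℝ) (fun i => k ≤ (i : ℕ))).comp
    (PiLp.volume_preserving_ofLp (Fin n))

lemma zPart_sub {n : ℕ} (k : ℕ) (x t : EuclideanSpace ℝ (Fin n)) :
    zPart k (x - t) = zPart k x - zPart k t := rfl

lemma yPart_sub {n : ℕ} (k : ℕ) (x t : EuclideanSpace ℝ (Fin n)) :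
    yPart k (x - t) = yPart k x - yPart k t := rfl

lemma norm_zPart_le_zNorm {n : ℕ} (k : ℕ) (x : EuclideanSpace ℝ (Fin n)) :
    ‖zPart k x‖ ≤ zNorm k x := by
  refine (pi_norm_le_iff_of_nonneg (Real.sqrt_nonneg _)).2 fun i => Real.abs_le_sqrt ?_
  exact Finset.single_le_sum (f := fun i : Fin n => x i ^ 2) (fun j _ => sq_nonneg _)
    (by simpa using i.2)

lemma zNorm_le_norm {n : ℕ} (k : ℕ) (x : EuclideanSpace ℝ (Fin n)) : zNorm k x ≤ ‖x‖ := by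
  rw [EuclideanSpace.norm_eq, zNorm]
  refine Real.sqrt_le_sqrt ?_
  simp only [Real.norm_eq_abs, sq_abs]
  exact Finset.sum_le_univ_sum_of_nonneg fun i => sq_nonneg _

lemma norm_yPart_le_norm {n : ℕ} (k : ℕ) (x : EuclideanSpace ℝ (Fin n)) : ‖yPart k x‖ ≤ ‖x‖ :=
  (pi_norm_le_iff_of_nonneg (norm_nonneg _)).2 fun i => PiLp.norm_apply_le x i.1

lemma zNorm_le_mul_norm_zPart {n : ℕ} (k : ℕ) (x : EuclideanSpace ℝ (Fin n)) :
    zNorm k x ≤ n * ‖zPart k x‖ := by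
  refine Real.sqrt_le_iff.2 ⟨by positivity, ?_⟩
  calc ∑ i ∈ Finset.univ.filter (fun i : Fin n => k ≤ (i : ℕ)), (x i) ^ 2
      ≤ ∑ i ∈ Finset.univ.filter (fun i : Fin n => k ≤ (i : ℕ)), ‖zPart k x‖ ^ 2 := by
        refine Finset.sum_le_sum fun i hi => ?_
        rw [← sq_abs]
        gcongr
        exact norm_le_pi_norm (zPart k x) ⟨i, by simpa using hi⟩
    _ ≤ ∑ i : Fin n, ‖zPart k x‖ ^ 2 := Finset.sum_le_univ_sum_of_nonneg fun i => sq_nonneg _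
    _ = n * ‖zPart k x‖ ^ 2 := by simp
    _ ≤ (n * ‖zPart k x‖) ^ 2 := by
        rw [mul_pow]
        gcongr
        exact_mod_cast Nat.le_self_pow two_ne_zero n

lemma finrank_zPart {n k : ℕ} : finrank ℝ ({i : Fin n // k ≤ (i : ℕ)} → ℝ) = n - k := by
  have h := Fintype.card_subtype_compl (fun i : Fin n => (i : ℕ) < k)
  simp only [not_lt, Fintype.card_fin] at h
  rw [finrank_fintype_fun_eq_card, h, Fintype.card_subtype, Fin.card_filter_val_lt]
  omega

lemma finrank_yPart {n k : ℕ} (h : k ≤ n) :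
    finrank ℝ ({i : Fin n // ¬ k ≤ (i : ℕ)} → ℝ) = k := by
  rw [finrank_fintype_fun_eq_card, Fintype.card_subtype]
  simp only [not_le]
  rw [Fin.card_filter_val_lt]
  omega

/-- `u` decays at least like `(1 + |z|)⁻ˢ`. -/
def DecaysAtRate {n : ℕ} (k : ℕ) (u : EuclideanSpace ℝ (Fin n) → ℝ) (s : ℝ) : Prop :=
  ∃ C : ℝ≥0∞, C ≠ ⊤ ∧ ∀ x, ENNReal.ofReal (u x) ≤ C * (1 + ‖zPart k x‖ₑ) ^ (-s)

lemma DecaysAtRate.mono {n k : ℕ} {u : EuclideanSpace ℝ (Fin n) → ℝ} {s s' : ℝ}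
    (h : DecaysAtRate k u s) (hs : s' ≤ s) : DecaysAtRate k u s' := by
  obtain ⟨C, hC, h⟩ := h
  refine ⟨C, hC, fun x => (h x).trans ?_⟩
  gcongr
  exact le_self_add

lemma one_add_enorm_zPart {n : ℕ} (k : ℕ) (x : EuclideanSpace ℝ (Fin n)) :
    1 + ‖zPart k x‖ₑ = ENNReal.ofReal (1 + ‖zPart k x‖) := by
  rw [ENNReal.ofReal_add zero_le_one (norm_nonneg _), ENNReal.ofReal_one, ofReal_norm]

lemma decaysAtRate_iff {n k : ℕ} {u : EuclideanSpace ℝ (Fin n) → ℝ} {s : ℝ} (hs : 0 ≤ s)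
    (hu : ∀ x, 0 ≤ u x) :
    DecaysAtRate k u s ↔ ∃ M : ℝ, ∀ x, (1 + zNorm k x) ^ s * u x ≤ M := by
  have hz (x : EuclideanSpace ℝ (Fin n)) : 0 ≤ zNorm k x := Real.sqrt_nonneg _
  constructor
  · rintro ⟨C, hC, h⟩
    lift C to NNReal using hC
    refine ⟨(1 + n) ^ s * C, fun x => ?_⟩
    have h := h x
    have h0 : 0 < 1 + ‖zPart k x‖ := by positivity
    rw [one_add_enorm_zPart, ENNReal.ofReal_rpow_of_pos h0, ← ENNReal.ofReal_coe_nnreal,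
      ← ENNReal.ofReal_mul (by positivity),
      ENNReal.ofReal_le_ofReal_iff (by positivity), Real.rpow_neg h0.le, ← div_eq_mul_inv,
      le_div_iff₀ (by positivity)] at h
    have h1 : 1 + zNorm k x ≤ (1 + n) * (1 + ‖zPart k x‖) := by
      have := zNorm_le_mul_norm_zPart k x
      have : 0 ≤ ‖zPart k x‖ := norm_nonneg _
      have : (0 : ℝ) ≤ n := by positivity
      nlinarith
    have := hz x
    have := hu x
    calc (1 + zNorm k x) ^ s * u x ≤ ((1 + n) * (1 + ‖zPart k x‖)) ^ s * u x := by gcongr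
      _ = (1 + n) ^ s * (u x * (1 + ‖zPart k x‖) ^ s) := by
        rw [Real.mul_rpow (by positivity) h0.le]; ring
      _ ≤ _ := by gcongr
  · rintro ⟨M, h⟩
    refine ⟨ENNReal.ofReal M, by simp, fun x => ?_⟩
    have h0 : 0 < 1 + ‖zPart k x‖ := by positivity
    have hM : 0 ≤ M := le_trans (mul_nonneg (Real.rpow_nonneg (by linarith [hz x]) _) (hu x)) (h x)
    rw [one_add_enorm_zPart, ENNReal.ofReal_rpow_of_pos h0, ← ENNReal.ofReal_mul hM]
    apply ENNReal.ofReal_le_ofReal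
    rw [Real.rpow_neg h0.le, ← div_eq_mul_inv, le_div_iff₀ (by positivity), mul_comm]
    refine le_trans ?_ (h x)
    gcongr
    · exact hu x
    · exact norm_zPart_le_zNorm k x

lemma enorm_sub_rpow_neg_le {n : ℕ} (k : ℕ) {a : ℝ} (ha : 0 ≤ a)
    (x t : EuclideanSpace ℝ (Fin n)) :
    ‖x - t‖ₑ ^ (-a) ≤
      2 ^ a * (‖yPart k x - yPart k t‖ₑ + ‖zPart k x - zPart k t‖ₑ) ^ (-a) := by
  refine ENNReal.rpow_neg_le_mul_rpow_neg ha (by simp) (by simp) ?_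
  rw [← yPart_sub, ← zPart_sub, two_mul]
  gcongr
  · simp only [← ofReal_norm]
    exact ENNReal.ofReal_le_ofReal (norm_yPart_le_norm k _)
  · simp only [← ofReal_norm]
    exact ENNReal.ofReal_le_ofReal ((norm_zPart_le_zNorm k _).trans (zNorm_le_norm k _))

lemma enorm_div_norm_rpow_le {V : Type*} [NormedAddCommGroup V] {a : ℝ} (ha : 0 < a) (v : V)
    {f : ℝ} (hf : 0 ≤ f) : ‖f / ‖v‖ ^ a‖ₑ ≤ ENNReal.ofReal f * ‖v‖ₑ ^ (-a) := by
  rcases eq_or_ne v 0 with rfl | hv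
  · simp [Real.zero_rpow ha.ne']
  · have hv : 0 < ‖v‖ := norm_pos_iff.2 hv
    rw [Real.enorm_eq_ofReal (by positivity), ← ofReal_norm, ENNReal.ofReal_rpow_of_pos hv,
      ← ENNReal.ofReal_mul hf, Real.rpow_neg hv.le, div_eq_mul_inv]

/-- One step of the bootstrap: decay of `u` improves through its representation as a Newtonian
potential. -/
lemma DecaysAtRate.newtonian_potential {n k : ℕ} {K u : EuclideanSpace ℝ (Fin n) → ℝ}
    {B c p s γ : ℝ} (hkn : 2 < n - k) (hKbd : ∀ x, K x ≤ B) (hKnn : ∀ x, 0 ≤ K x)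
    (hu : ∀ x, 0 ≤ u x) (hp : 0 < p)
    (hrep : ∀ x, u x = c * ∫ t, K t * u t ^ p / ‖x - t‖ ^ ((n : ℝ) - 2))
    (h : DecaysAtRate k u s) (hq : 2 < s * p)
    (hγ : (s * p < n - k ∧ γ = s * p - 2) ∨ (n - k < s * p ∧ γ = n - k - 2)) :
    DecaysAtRate k u γ := by
  have hnk : k ≤ n := by omega
  have hn : (2 : ℝ) < n := by exact_mod_cast (by omega : 2 < n)
  obtain ⟨C, hC, h⟩ := h
  have hdz := finrank_zPart (n := n) (k := k)
  have hdz' : (finrank ℝ ({i : Fin n // k ≤ (i : ℕ)} → ℝ) : ℝ) = n - k := by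
    rw [hdz, Nat.cast_sub hnk]
  have : Nontrivial ({i : Fin n // k ≤ (i : ℕ)} → ℝ) :=
    Module.nontrivial_of_finrank_pos (R := ℝ) (by omega)
  obtain ⟨A, hA, hA'⟩ := exists_lintegral_prod_le
    (volume : Measure ({i : Fin n // k ≤ (i : ℕ)} → ℝ))
    (volume : Measure ({i : Fin n // ¬ k ≤ (i : ℕ)} → ℝ)) (a := n - 2) (q := s * p) (γ := γ)
    (by rw [hdz', finrank_yPart hnk]; ring) (by omega) hq (by rwa [hdz'])
  set G : ℝ≥0∞ := ENNReal.ofReal B * C ^ p * 2 ^ ((n : ℝ) - 2) with hG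
  have hGt : G ≠ ⊤ := by
    have := ENNReal.rpow_ne_top_of_nonneg hp.le hC
    finiteness
  have hbound (x t : EuclideanSpace ℝ (Fin n)) :
      ‖K t * u t ^ p / ‖x - t‖ ^ ((n : ℝ) - 2)‖ₑ ≤ G * ((1 + ‖zPart k t‖ₑ) ^ (-(s * p)) *
        (‖yPart k x - yPart k t‖ₑ + ‖zPart k x - zPart k t‖ₑ) ^ (-((n : ℝ) - 2))) := by
    calc _ ≤ ENNReal.ofReal (K t * u t ^ p) * ‖x - t‖ₑ ^ (-((n : ℝ) - 2)) :=
          enorm_div_norm_rpow_le (by linarith) _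
            (mul_nonneg (hKnn t) (Real.rpow_nonneg (hu t) _))
      _ ≤ (ENNReal.ofReal B * (C * (1 + ‖zPart k t‖ₑ) ^ (-s)) ^ p) * (2 ^ ((n : ℝ) - 2) *
          (‖yPart k x - yPart k t‖ₑ + ‖zPart k x - zPart k t‖ₑ) ^ (-((n : ℝ) - 2))) := by
          rw [ENNReal.ofReal_mul (hKnn t), ← ENNReal.ofReal_rpow_of_nonneg (hu t) hp.le]
          gcongr
          · exact hKbd t
          · exact h t
          · exact enorm_sub_rpow_neg_le k (by linarith) x t
      _ = _ := by
          rw [ENNReal.mul_rpow_of_nonneg _ _ hp.le, ← ENNReal.rpow_mul, hG, neg_mul]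
          ring
  refine ⟨‖c‖ₑ * (G * A), by finiteness, fun x => ?_⟩
  have hmp := (measurePreserving_zPart_yPart n k).lintegral_comp
    (f := fun w => (1 + ‖w.1‖ₑ) ^ (-(s * p)) *
      (‖yPart k x - w.2‖ₑ + ‖zPart k x - w.1‖ₑ) ^ (-((n : ℝ) - 2))) (by fun_prop)
  calc ENNReal.ofReal (u x) = ‖u x‖ₑ := (Real.enorm_eq_ofReal (hu x)).symm
    _ = ‖c‖ₑ * ‖∫ t, K t * u t ^ p / ‖x - t‖ ^ ((n : ℝ) - 2)‖ₑ := by rw [hrep x, enorm_mul]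
    _ ≤ ‖c‖ₑ * ∫⁻ t, G * ((1 + ‖zPart k t‖ₑ) ^ (-(s * p)) *
        (‖yPart k x - yPart k t‖ₑ + ‖zPart k x - zPart k t‖ₑ) ^ (-((n : ℝ) - 2))) := by
        gcongr
        exact (enorm_integral_le_lintegral_enorm _).trans (lintegral_mono (hbound x))
    _ ≤ ‖c‖ₑ * (G * (A * (1 + ‖zPart k x‖ₑ) ^ (-γ))) := by
        rw [lintegral_const_mul' _ _ hGt, hmp]
        gcongr
        exact hA' _ _
    _ = _ := by ring

/-- Iteration of the map `τ ↦ p τ` until the optimal rate is reached. -/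
lemma optimal_rate_of_bootstrap {P : ℝ → Prop} {h p m τ : ℝ}
    (hmono : ∀ s s', s' ≤ s → P s → P s') (hh : 0 < h) (hp : 1 < p) (hhp : h * p = h + 2)
    (hlt : ∀ s, 2 < s * p → s * p < m → P s → P (s * p - 2))
    (hgt : ∀ s, 2 < s * p → m < s * p → P s → P (m - 2))
    (hτ : 0 < τ) (hP : P (h + τ)) : P (m - 2) := by
  set ρ := (1 + p) / 2 with hρ
  have hρ1 : 1 < ρ := by linarith
  have hρp : ρ < p := by linarith
  have step (τ : ℝ) (hτ : 0 < τ) (hP : P (h + τ)) : P (m - 2) ∨ P (h + ρ * τ) := by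
    rcases lt_or_ge m ((h + τ) * p) with hm | hm
    · exact Or.inl (hgt _ (by nlinarith) hm hP)
    · right
      have e : (h + ρ / p * τ) * p = h + 2 + ρ * τ := by
        field_simp
        linarith
      have hlt' : ρ / p * τ ≤ τ := by
        have : ρ / p ≤ 1 := (div_le_one (by linarith)).2 hρp.le
        nlinarith
      have h0 : 0 < ρ * τ := by positivity
      have := hlt (h + ρ / p * τ) (by linarith) (by nlinarith) (hmono _ _ (by linarith) hP)
      rw [e] at this
      convert this using 1
      ring
  by_contra hcon
  have iter (j : ℕ) : P (h + ρ ^ j * τ) := by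
    induction j with
    | zero => simpa using hP
    | succ j ih =>
      have := (step _ (by positivity) ih).resolve_left hcon
      rwa [← mul_assoc, ← pow_succ'] at this
  obtain ⟨j, hj⟩ := pow_unbounded_of_one_lt (m / τ) hρ1
  rw [div_lt_iff₀ hτ] at hj
  have h0 : 0 < ρ ^ j * τ := by positivity
  exact hcon (hgt _ (by nlinarith) (by nlinarith) (iter j))

theorem stmt_13 {n k : ℕ} (hn : 3 ≤ n) (hk : 1 ≤ k) (hkn : 2 * k < n - 2)
    (K u : EuclideanSpace ℝ (Fin n) → ℝ)
    (hKbd : ∃ B : ℝ, ∀ x, K x ≤ B)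
    (hKnn : ∀ x, 0 ≤ K x) (hKne : ∃ x, K x ≠ 0)
    (hupos : ∀ x, 0 < u x) (huC2 : ContDiff ℝ 2 u)
    (hPDE : ∀ x, - lap u x = K x * u x ^ (((n : ℝ) + 2) / ((n : ℝ) - 2)))
    (hrep : ∀ x, u x =
      (1 / ((n : ℝ) * ((n : ℝ) - 2) *
        (volume (Metric.ball (0 : EuclideanSpace ℝ (Fin n)) 1)).toReal)) *
      ∫ t : EuclideanSpace ℝ (Fin n),
        K t * u t ^ (((n : ℝ) + 2) / ((n : ℝ) - 2)) / ‖x - t‖ ^ ((n : ℝ) - 2))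
    (hdecay : ∃ τ : ℝ, 0 < τ ∧ ∃ M : ℝ,
      ∀ x, (1 + zNorm k x) ^ (((n : ℝ) - 2) / 2 + τ) * u x ≤ M) :
    ∃ M : ℝ, ∀ x, (1 + zNorm k x) ^ ((n : ℝ) - 2 - k) * u x ≤ M := by
  obtain ⟨B, hB⟩ := hKbd
  obtain ⟨τ, hτ, hM⟩ := hdecay
  have hu x := (hupos x).le
  have hn' : (3 : ℝ) ≤ n := by exact_mod_cast hn
  have hkn' : (2 : ℝ) + k ≤ n := by exact_mod_cast (by omega : 2 + k ≤ n)
  rw [← decaysAtRate_iff (by linarith) hu] at hM ⊢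
  set p : ℝ := ((n : ℝ) + 2) / ((n : ℝ) - 2) with hp
  have hp1 : 1 < p := by rw [hp, lt_div_iff₀] <;> linarith
  have hhp : ((n : ℝ) - 2) / 2 * p = ((n : ℝ) - 2) / 2 + 2 := by
    have : (n : ℝ) - 2 ≠ 0 := by linarith
    rw [hp]
    field_simp
    ring
  have key {s γ : ℝ} (hs : 2 < s * p)
      (hγ : (s * p < n - k ∧ γ = s * p - 2) ∨ (n - k < s * p ∧ γ = n - k - 2))
      (h : DecaysAtRate k u s) : DecaysAtRate k u γ :=
    h.newtonian_potential (by omega) hB hKnn hu (by linarith) hrep hs hγ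
  rw [sub_right_comm]
  exact optimal_rate_of_bootstrap (fun s s' hs h => h.mono hs) (by linarith) hp1 hhp
    (fun s hs hlt => key hs (Or.inl ⟨hlt, rfl⟩)) (fun s hs hgt => key hs (Or.inr ⟨hgt, rfl⟩)) hτ hM
end
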